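/- arXiv:2201.00984 — 3 statements merged into one kernel-verified Lean document; each statement's English description precedes it below -/
import Mathlib

section
/- Let (R, m) be a commutative Noetherian local ring, let f₁, …, f_c ∈ m be an R-regular sequence, and let N be a finitely generated R-module such that Tor_1^R(N, R/(f₁, …, f_c)) = 0. Then f₁, …, f_c is also an N-regular sequence. -/
open CategoryTheory IsLocalRing

section Prelim

variable (R : Type) [CommRing R]

/-- `Tor_i^R(M, N) = 0`. -/
noncomputable def TorVanish (M N : Type) [AddCommGroup M] [Module R M]
    [AddCommGroup N] [Module R N] (i : ℕ) : Prop :=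
  Subsingleton (((Tor (ModuleCat R) i).obj (ModuleCat.of R M)).obj (ModuleCat.of R N))

/-- `Ext_R^i(M, N) = 0`. -/
noncomputable def ExtVanish (M N : Type) [AddCommGroup M] [Module R M]
    [AddCommGroup N] [Module R N] (i : ℕ) : Prop :=
  Subsingleton (((Ext R (ModuleCat R) i).obj (Opposite.op (ModuleCat.of R M))).obj
    (ModuleCat.of R N))

/-- `pd_R M < n`, expressed by the standard characterization
`Ext_R^i(M, -) = 0` for all `i ≥ n`. -/
def ProjDimLT (M : Type) [AddCommGroup M] [Module R M] (n : ℕ) : Prop :=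
  ∀ (N : ModuleCat R) (i : ℕ), n ≤ i → ExtVanish R M N i

/-- `pd_R M < ∞`. -/
def ProjDimFinite (M : Type) [AddCommGroup M] [Module R M] : Prop :=
  ∃ n, ProjDimLT R M n

/-- `id_R M < n`, expressed by the standard characterization
`Ext_R^i(-, M) = 0` for all `i ≥ n`. -/
def InjDimLT (M : Type) [AddCommGroup M] [Module R M] (n : ℕ) : Prop :=
  ∀ (N : ModuleCat R) (i : ℕ), n ≤ i → ExtVanish R N M i

/-- `id_R M < ∞`. -/
def InjDimFinite (M : Type) [AddCommGroup M] [Module R M] : Prop :=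
  ∃ n, InjDimLT R M n

/-- `M` is a Tor-rigid `R`-module. -/
def TorRigid (M : Type) [AddCommGroup M] [Module R M] : Prop :=
  ∀ (N : ModuleCat R), Module.Finite R N → ∀ n : ℕ, 1 ≤ n → TorVanish R M N n →
    ∀ i : ℕ, n ≤ i → TorVanish R M N i

variable [IsLocalRing R]

/-- The depth of `M`: the supremum of lengths of `M`-regular sequences contained in
the maximal ideal. -/
noncomputable def depth (M : Type) [AddCommGroup M] [Module R M] : ℕ∞ :=
  sSup {n : ℕ∞ | ∃ rs : List R, (∀ x ∈ rs, x ∈ maximalIdeal R) ∧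
    RingTheory.Sequence.IsRegular M rs ∧ (rs.length : ℕ∞) = n}

/-- The dimension of a module, i.e. the Krull dimension of `R ⧸ ann M`. -/
noncomputable def moduleDim (M : Type) [AddCommGroup M] [Module R M] : WithBot ℕ∞ :=
  ringKrullDim (R ⧸ Module.annihilator R M)

/-- `M` is an Ulrich `R`-module of dimension `s` : `M` is nonzero, Cohen–Macaulay of
dimension `s`, and there is an `M`-regular sequence `x₁, …, x_s` in the maximal ideal
with `mM = (x₁, …, x_s)M`. -/
def IsUlrich (M : Type) [AddCommGroup M] [Module R M] (s : ℕ) : Prop :=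
  Nontrivial M ∧ moduleDim R M = (s : ℕ∞) ∧ depth R M = (s : ℕ∞) ∧
  ∃ rs : List R, rs.length = s ∧ (∀ x ∈ rs, x ∈ maximalIdeal R) ∧
    RingTheory.Sequence.IsRegular M rs ∧
    (maximalIdeal R) • (⊤ : Submodule R M) = (Ideal.ofList rs) • ⊤

/-- `R` is a regular local ring: the maximal ideal is generated by `dim R` elements. -/
def IsRegularLocal : Prop :=
  ∃ s : Finset R, Ideal.span (s : Set R) = maximalIdeal R ∧
    (s.card : WithBot ℕ∞) = ringKrullDim R

/-- `R` (of dimension `d`) has minimal multiplicity: there is an `R`-regular sequence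
`x₁, …, x_d` in the maximal ideal `m` with `m² = (x₁, …, x_d)m`. -/
def HasMinimalMultiplicity (d : ℕ) : Prop :=
  ∃ rs : List R, rs.length = d ∧ (∀ x ∈ rs, x ∈ maximalIdeal R) ∧
    RingTheory.Sequence.IsWeaklyRegular R rs ∧
    maximalIdeal R ^ 2 = Ideal.ofList rs * maximalIdeal R

/-- The `n`-th Betti number of `M` over the local ring `R`, i.e. the dimension over the
residue field `k = R ⧸ m` of `Tor_n^R(M, k)` (which is an `m`-torsion module, so we take
the dimension of its reduction mod `m`). -/
noncomputable def betti (M : Type) [AddCommGroup M] [Module R M] (n : ℕ) : ℕ :=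
  Module.finrank (R ⧸ maximalIdeal R)
    ((((Tor (ModuleCat R) n).obj (ModuleCat.of R M)).obj
        (ModuleCat.of R (R ⧸ maximalIdeal R))) ⧸
      (maximalIdeal R • (⊤ : Submodule R
        (((Tor (ModuleCat R) n).obj (ModuleCat.of R M)).obj
          (ModuleCat.of R (R ⧸ maximalIdeal R))))))

end Prelim


section Helpers

open TensorProduct

theorem aux_mem_smul_top {R : Type} [CommRing R] {n : ℕ} (I : Ideal R) (x : Fin n → R) :
    x ∈ (I • ⊤ : Submodule R (Fin n → R)) ↔ ∀ i, x i ∈ I := by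
  constructor
  · intro h i
    refine Submodule.smul_induction_on h ?_ ?_
    · intro r hr y _
      exact I.mul_mem_right _ hr
    · intro y z hy hz
      exact I.add_mem hy hz
  · intro h
    rw [pi_eq_sum_univ' x]
    exact Submodule.sum_mem _ fun i _ => Submodule.smul_mem_smul (h i) trivial

theorem aux_chase {R : Type} [CommRing R] (I : Ideal R)
    {F N P0 P1 P2 : Type} [AddCommGroup F] [Module R F] [Module.Flat R F]
    [AddCommGroup N] [Module R N]
    [AddCommGroup P0] [Module R P0] [AddCommGroup P1] [Module R P1]
    [AddCommGroup P2] [Module R P2] [Module.Flat R P0]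
    (p : F →ₗ[R] N) (hp : Function.Surjective p)
    (d2 : P2 →ₗ[R] P1) (d1 : P1 →ₗ[R] P0) (e : P0 →ₗ[R] R ⧸ I)
    (he : Function.Surjective e) (hd1 : Function.Exact d1 e) (hd : d1 ∘ₗ d2 = 0)
    (hN : Function.Exact (d2.lTensor N) (d1.lTensor N)) :
    LinearMap.ker p ⊓ I • ⊤ ≤ I • LinearMap.ker p := by
  rintro x ⟨hxK, hxI⟩
  set K := LinearMap.ker p with hK
  obtain ⟨q, hq⟩ := he 1
  have hexF := lTensor_exact F hd1 he
  have hexK := lTensor_exact K hd1 he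
  -- x ⊗ 1 = 0 in F ⊗ R/I
  have h0 : x ⊗ₜ[R] (1 : R ⧸ I) = 0 := by
    apply (tensorQuotEquivQuotSMul F I).injective
    rw [map_zero]
    have := tensorQuotEquivQuotSMul_tmul_mk (R := R) (M := F) I x 1
    rw [map_one, one_smul] at this
    rw [this]
    exact (Submodule.Quotient.mk_eq_zero _).2 hxI
  obtain ⟨w, hw⟩ := (hexF (x ⊗ₜ q)).1 (by simpa [hq] using h0)
  have hw' : d1.lTensor N (p.rTensor P1 w) = 0 := by
    have : d1.lTensor N (p.rTensor P1 w) = p.rTensor P0 (d1.lTensor F w) := by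
      rw [← LinearMap.comp_apply, ← LinearMap.comp_apply, LinearMap.lTensor_comp_rTensor,
        LinearMap.rTensor_comp_lTensor]
    rw [this, hw, LinearMap.rTensor_tmul, LinearMap.mem_ker.1 hxK, zero_tmul]
  obtain ⟨v', hv'⟩ := (hN _).1 hw'
  obtain ⟨v, rfl⟩ := LinearMap.rTensor_surjective P2 hp v'
  have hexp : Function.Exact K.subtype p := LinearMap.exact_subtype_ker_map p
  have h1 : p.rTensor P1 (w - d2.lTensor F v) = 0 := by
    have : d2.lTensor N (p.rTensor P2 v) = p.rTensor P1 (d2.lTensor F v) := by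
      rw [← LinearMap.comp_apply, ← LinearMap.comp_apply, LinearMap.lTensor_comp_rTensor,
        LinearMap.rTensor_comp_lTensor]
    rw [map_sub, ← this, hv', sub_self]
  obtain ⟨u, hu⟩ := (rTensor_exact P1 hexp hp _).1 h1
  have h2 : d1.lTensor K u = (⟨x, hxK⟩ : K) ⊗ₜ q := by
    apply Module.Flat.rTensor_preserves_injective_linearMap (M := P0) K.subtype K.injective_subtype
    have : K.subtype.rTensor P0 (d1.lTensor K u) = d1.lTensor F (K.subtype.rTensor P1 u) := by
      rw [← LinearMap.comp_apply, ← LinearMap.comp_apply, LinearMap.lTensor_comp_rTensor,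
        LinearMap.rTensor_comp_lTensor]
    rw [this, hu, map_sub, hw, ← LinearMap.comp_apply (LinearMap.lTensor F d1),
      ← LinearMap.lTensor_comp, hd]
    simp
  have h3 : (⟨x, hxK⟩ : K) ⊗ₜ[R] (1 : R ⧸ I) = 0 := by
    have := (hexK _).2 ⟨u, h2⟩
    simpa [hq] using this
  have h4 : (⟨x, hxK⟩ : K) ∈ (I • ⊤ : Submodule R K) := by
    have := tensorQuotEquivQuotSMul_tmul_mk (R := R) (M := K) I ⟨x, hxK⟩ 1
    rw [map_one, one_smul, h3, map_zero] at this
    exact (Submodule.Quotient.mk_eq_zero _).1 this.symm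
  have h5 := Submodule.mem_map_of_mem (f := K.subtype) h4
  rw [Submodule.map_smul'', Submodule.map_top, Submodule.range_subtype] at h5
  exact h5

theorem aux_tor {R : Type} [CommRing R] (I : Ideal R)
    {F N : Type} [AddCommGroup F] [Module R F] [Module.Flat R F]
    [AddCommGroup N] [Module R N]
    (p : F →ₗ[R] N) (hp : Function.Surjective p)
    (hTor : TorVanish R N (R ⧸ I) 1) :
    LinearMap.ker p ⊓ I • ⊤ ≤ I • LinearMap.ker p := by
  let X : ModuleCat R := ModuleCat.of R (R ⧸ I)
  let P : ProjectiveResolution X := ProjectiveResolution.of X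
  let G := (MonoidalCategory.tensoringLeft (ModuleCat R)).obj (ModuleCat.of R N)
  have hz : Limits.IsZero ((G.leftDerived 1).obj X) :=
    @ModuleCat.isZero_of_subsingleton _ _ _ hTor
  have hz2 := hz.of_iso (P.isoLeftDerivedObj G 1).symm
  have hex : ((G.mapHomologicalComplex _).obj P.complex).ExactAt 1 :=
    (HomologicalComplex.exactAt_iff_isZero_homology _ _).2 hz2
  rw [HomologicalComplex.exactAt_iff' _ 2 1 0 (by simp) (by simp),
    ShortComplex.ShortExact.moduleCat_exact_iff_function_exact] at hex
  have h0 := P.exact₀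
  rw [ShortComplex.ShortExact.moduleCat_exact_iff_function_exact] at h0
  have hs : Function.Surjective (P.π.f 0).hom := (ModuleCat.epi_iff_surjective _).1 inferInstance
  have : Module.Projective R (P.complex.X 0) :=
    (IsProjective.iff_projective _).2 (P.projective 0)
  have hd : (P.complex.d 1 0).hom ∘ₗ (P.complex.d 2 1).hom = 0 := by
    rw [← ModuleCat.hom_comp, P.complex.d_comp_d]; rfl
  exact aux_chase I p hp (P.complex.d 2 1).hom (P.complex.d 1 0).hom (P.π.f 0).hom hs h0 hd hex

theorem aux_reg {R : Type} [CommRing R] [IsNoetherianRing R] [IsLocalRing R]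
    {n : ℕ} {N : Type} [AddCommGroup N] [Module R N]
    (p : (Fin n → R) →ₗ[R] N) (hp : Function.Surjective p) (I : Ideal R) (f : R)
    (hf : f ∈ maximalIdeal R) (hreg : ∀ r, f * r ∈ I → r ∈ I)
    (h : LinearMap.ker p ⊓ (I ⊔ Ideal.span {f}) • ⊤ ≤ (I ⊔ Ideal.span {f}) • LinearMap.ker p) :
    LinearMap.ker p ⊓ I • ⊤ ≤ I • LinearMap.ker p ∧
    ∀ y : N, f • y ∈ (I • ⊤ : Submodule R N) → y ∈ (I • ⊤ : Submodule R N) := by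
  set K := LinearMap.ker p with hK
  have hF : ∀ x : Fin n → R, f • x ∈ (I • ⊤ : Submodule R (Fin n → R)) →
      x ∈ (I • ⊤ : Submodule R (Fin n → R)) := by
    intro x hx
    rw [aux_mem_smul_top] at hx ⊢
    exact fun i => hreg _ (hx i)
  have hmem : ∀ x ∈ K, x ∈ ((I ⊔ Ideal.span {f}) • ⊤ : Submodule R (Fin n → R)) →
      ∃ y ∈ I • K, ∃ k ∈ K, x = y + f • k := by
    intro x hx hx'
    have := h ⟨hx, hx'⟩
    rw [Submodule.sup_smul, Submodule.ideal_span_singleton_smul] at this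
    obtain ⟨y, hy, z, hz, rfl⟩ := Submodule.mem_sup.1 this
    obtain ⟨k, hk, rfl⟩ := Submodule.mem_smul_pointwise_iff_exists _ _ _ |>.1 hz
    exact ⟨y, hy, k, hk, rfl⟩
  have hIK : I • K ≤ I • ⊤ := smul_mono_right I le_top
  constructor
  · refine Submodule.le_of_le_smul_of_le_jacobson_bot (I := Ideal.span {f})
      (IsNoetherian.noetherian _) ?_ ?_
    · rw [IsLocalRing.jacobson_eq_maximalIdeal _ bot_ne_top, Ideal.span_le]
      simpa using hf
    · rintro x ⟨hx, hxI⟩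
      obtain ⟨y, hy, k, hk, rfl⟩ := hmem x hx (Submodule.smul_mono_left le_sup_left hxI)
      refine Submodule.add_mem_sup hy (Submodule.smul_mem_smul (Ideal.mem_span_singleton_self f)
        ⟨hk, hF k ?_⟩)
      exact ((Submodule.add_mem_iff_right _ (hIK hy)).1 hxI)
  · intro y hy
    have htop : (I • ⊤ : Submodule R N) = (I • ⊤ : Submodule R (Fin n → R)).map p := by
      rw [Submodule.map_smul'', Submodule.map_top, LinearMap.range_eq_top.2 hp]
    rw [htop] at hy ⊢
    obtain ⟨u, rfl⟩ := hp y
    obtain ⟨z, hz, hzu⟩ := hy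
    have hk : f • u - z ∈ K := by rw [hK, LinearMap.mem_ker, map_sub, map_smul, hzu, sub_self]
    have hk' : f • u - z ∈ ((I ⊔ Ideal.span {f}) • ⊤ : Submodule R (Fin n → R)) :=
      Submodule.sub_mem _ (Submodule.smul_mem_smul
        (Ideal.mem_sup_right (Ideal.mem_span_singleton_self f)) trivial)
        (Submodule.smul_mono_left le_sup_left hz)
    obtain ⟨a, ha, k, hkK, hak⟩ := hmem _ hk hk'
    refine ⟨u - k, hF _ ?_, by rw [map_sub, LinearMap.mem_ker.1 hkK, sub_zero]⟩
    have : f • (u - k) = z + a := by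
      rw [smul_sub, sub_eq_iff_eq_add, add_assoc, ← hak]; abel
    rw [this]
    exact Submodule.add_mem _ hz (hIK ha)

theorem aux_smulRegular_iff {R M : Type} [CommRing R] [AddCommGroup M] [Module R M]
    (S : Submodule R M) (f : R) :
    IsSMulRegular (M ⧸ S) f ↔ ∀ y : M, f • y ∈ S → y ∈ S := by
  rw [isSMulRegular_iff_right_eq_zero_of_smul]
  constructor
  · intro h y hy
    rw [← Submodule.Quotient.mk_eq_zero] at hy ⊢
    exact h _ hy
  · intro h y hy
    obtain ⟨y, rfl⟩ := Submodule.Quotient.mk_surjective _ y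
    rw [← Submodule.Quotient.mk_smul, Submodule.Quotient.mk_eq_zero] at hy
    exact (Submodule.Quotient.mk_eq_zero _).2 (h y hy)

end Helpers

theorem statement16 (R : Type) [CommRing R] [IsNoetherianRing R] [IsLocalRing R]
    (fs : List R) (hmem : ∀ x ∈ fs, x ∈ maximalIdeal R)
    (hreg : RingTheory.Sequence.IsWeaklyRegular R fs)
    (N : Type) [AddCommGroup N] [Module R N] [Module.Finite R N]
    (hTor : TorVanish R N (R ⧸ Ideal.ofList fs) 1) :
    RingTheory.Sequence.IsWeaklyRegular N fs := by
  obtain ⟨n, p, hp⟩ := Module.Finite.exists_fin' R N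
  have step : ∀ i (hi : i < fs.length),
      (LinearMap.ker p ⊓ Ideal.ofList (fs.take (i + 1)) • ⊤ ≤
        Ideal.ofList (fs.take (i + 1)) • LinearMap.ker p) →
      (LinearMap.ker p ⊓ Ideal.ofList (fs.take i) • ⊤ ≤
        Ideal.ofList (fs.take i) • LinearMap.ker p) ∧
      IsSMulRegular (N ⧸ (Ideal.ofList (fs.take i) • ⊤ : Submodule R N)) fs[i] := by
    intro i hi h
    rw [aux_smulRegular_iff]
    have hr := hreg.regular_mod_prev i hi
    rw [aux_smulRegular_iff] at hr
    refine aux_reg p hp _ _ (hmem _ (List.getElem_mem hi)) (fun r hr' => ?_) ?_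
    · simpa using hr r (by simpa using hr')
    · rwa [← List.take_concat_get' fs i hi, Ideal.ofList_append, Ideal.ofList_singleton] at h
  have key : ∀ i, i ≤ fs.length →
      (LinearMap.ker p ⊓ Ideal.ofList (fs.take i) • ⊤ ≤
        Ideal.ofList (fs.take i) • LinearMap.ker p) := by
    intro i hi
    induction hi using Nat.decreasingInduction with
    | self => rw [List.take_length]; exact aux_tor _ p hp hTor
    | of_succ k hk ih => exact (step k hk ih).1
  exact ⟨fun i hi => (step i hi (key _ hi)).2⟩
end

section
/- Let (R, m, k) be a Cohen–Macaulay commutative Noetherian local ring of dimension d with minimal multiplicity, i.e., there exists an R-regular sequence x₁, …, x_d ∈ m with m² = (x₁, …, x_d)m. Let f₁, …, f_c ∈ m be an R-regular sequence and set S = R/(f₁, …, f_c). Let M and N be finitely generated S-modules and set i₀ = dim(S) − depth_S(M). Then the following are equivalent: (1) Tor_i^S(M, N) = 0 for some d+c+1 consecutive values of i with all these values ≥ i₀ + 2; (2) Tor_i^S(M, N) = 0 for all i ≥ i₀ + 1. Moreover, if these hold, then either pd_R M < ∞ or pd_R N < ∞. -/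
open CategoryTheory IsLocalRing

namespace MT
open TensorProduct Function

section basic
variable (R : Type) [CommRing R]

noncomputable abbrev fc (Y : Type) [AddCommGroup Y] [Module R Y] : (Y →₀ R) →ₗ[R] Y :=
  Finsupp.linearCombination R (id : Y → Y)

lemma fc_surj (Y : Type) [AddCommGroup Y] [Module R Y] : Surjective (fc R Y) := by
  intro y
  exact ⟨Finsupp.single y 1, by simp [fc]⟩

noncomputable abbrev Syz (Y : Type) [AddCommGroup Y] [Module R Y] : Submodule R (Y →₀ R) :=
  LinearMap.ker (fc R Y)

/-- `Tor_1(X,Y)` -/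
noncomputable def T0 (X Y : Type) [AddCommGroup X] [Module R X] [AddCommGroup Y] [Module R Y] :
    Submodule R (X ⊗[R] (Syz R Y)) :=
  LinearMap.ker (LinearMap.lTensor X (Syz R Y).subtype)

noncomputable def syzIter : ℕ → ModuleCat.{0} R → ModuleCat.{0} R
  | 0, Y => Y
  | n+1, Y => syzIter n (ModuleCat.of R (Syz R Y))

/-- `T n X Y = Tor_{n+1}(X,Y)` -/
noncomputable abbrev T (n : ℕ) (X Y : Type) [AddCommGroup X] [Module R X] [AddCommGroup Y]
    [Module R Y] := T0 R X (syzIter R n (ModuleCat.of R Y))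

variable {R}
variable {X X' X'' Y : Type} [AddCommGroup X] [Module R X] [AddCommGroup X'] [Module R X']
  [AddCommGroup X''] [Module R X''] [AddCommGroup Y] [Module R Y]

noncomputable def map0 (Y : Type) [AddCommGroup Y] [Module R Y] (f : X →ₗ[R] X') :
    T0 R X Y →ₗ[R] T0 R X' Y :=
  (LinearMap.rTensor (Syz R Y) f).restrict (by
    intro x hx
    simp only [T0, LinearMap.mem_ker] at hx ⊢
    rw [← LinearMap.comp_apply, LinearMap.lTensor_comp_rTensor, ← LinearMap.rTensor_comp_lTensor,
      LinearMap.comp_apply, hx, map_zero])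

@[simp] lemma map0_coe (f : X →ₗ[R] X') (t : T0 R X Y) :
    (map0 Y f t : X' ⊗[R] Syz R Y) = LinearMap.rTensor (Syz R Y) f t := rfl

lemma map0_smul (r : R) (t : T0 R X Y) :
    map0 Y (r • (LinearMap.id : X →ₗ[R] X)) t = r • t := by
  ext
  simp [LinearMap.rTensor_smul]

lemma map0_comp (f : X →ₗ[R] X') (g : X' →ₗ[R] X'') (t : T0 R X Y) :
    map0 Y g (map0 Y f t) = map0 Y (g ∘ₗ f) t := by
  ext
  simp [LinearMap.rTensor_comp_apply]

lemma map0_id (t : T0 R X Y) : map0 Y (LinearMap.id : X →ₗ[R] X) t = t := by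
  ext
  simp

lemma T0_flat [Module.Flat R X] : Subsingleton (T0 R X Y) := by
  rw [T0, Submodule.subsingleton_iff_eq_bot, LinearMap.ker_eq_bot]
  exact Module.Flat.lTensor_preserves_injective_linearMap _ (Syz R Y).injective_subtype

lemma exact_mid0 (f : X' →ₗ[R] X) (g : X →ₗ[R] X'') (hf : Injective f) (hg : Surjective g)
    (h : Exact f g) : Exact (map0 Y f) (map0 Y g) := by
  have e := rTensor_exact (Syz R Y) h hg
  intro t
  constructor
  · intro ht
    have h1 : LinearMap.rTensor (Syz R Y) g t = 0 := by
      rw [← map0_coe, ht]; rfl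
    obtain ⟨s, hs⟩ := (e t.1).1 h1
    refine ⟨⟨s, ?_⟩, Subtype.ext hs⟩
    have inj : Injective (LinearMap.rTensor (Y →₀ R) f) :=
      Module.Flat.rTensor_preserves_injective_linearMap _ hf
    simp only [T0, LinearMap.mem_ker]
    apply inj
    rw [map_zero, ← LinearMap.comp_apply, LinearMap.rTensor_comp_lTensor,
      ← LinearMap.lTensor_comp_rTensor, LinearMap.comp_apply, hs]
    exact t.2
  · rintro ⟨s, rfl⟩
    rw [map0_comp, h.linearMap_comp_eq_zero]
    ext; simp

lemma exists_delta0 (f : X' →ₗ[R] X) (g : X →ₗ[R] X'') (hf : Injective f) (hg : Surjective g)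
    (h : Exact f g) : ∃ δ : T0 R X'' Y →ₗ[R] X' ⊗[R] Y, Exact (map0 Y g) δ ∧
      Exact δ (LinearMap.rTensor Y f) := by
  have hY : Exact (Syz R Y).subtype (fc R Y) := LinearMap.exact_subtype_ker_map _
  have e1 := rTensor_exact (Syz R Y) h hg
  have e2 := rTensor_exact (Y →₀ R) h hg
  have i2 : Injective (LinearMap.rTensor (Y →₀ R) f) :=
      Module.Flat.rTensor_preserves_injective_linearMap _ hf
  have s1 : Surjective (LinearMap.rTensor (Syz R Y) g) := LinearMap.rTensor_surjective _ hg
  have c1 := lTensor_exact (M := Syz R Y) (N := Y →₀ R) (P := Y) (f := (Syz R Y).subtype) (g := fc R Y) X' hY (fc_surj R Y)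
  have c2 := lTensor_exact (M := Syz R Y) (N := Y →₀ R) (P := Y) (f := (Syz R Y).subtype) (g := fc R Y) X hY (fc_surj R Y)
  refine ⟨SnakeLemma.δ' (LinearMap.lTensor X' (Syz R Y).subtype)
    (LinearMap.lTensor X (Syz R Y).subtype) (LinearMap.lTensor X'' (Syz R Y).subtype)
    _ _ e1 _ _ e2 ?_ ?_ (T0 R X'' Y).subtype ?_ (LinearMap.lTensor X' (fc R Y)) c1 s1 i2, ?_, ?_⟩
  · rw [LinearMap.lTensor_comp_rTensor, ← LinearMap.rTensor_comp_lTensor]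
  · rw [LinearMap.lTensor_comp_rTensor, ← LinearMap.rTensor_comp_lTensor]
  · exact LinearMap.exact_subtype_ker_map _
  · apply SnakeLemma.exact_δ'_right (ι₂ := (T0 R X Y).subtype)
    · exact LinearMap.exact_subtype_ker_map _
    · rfl
    · exact Submodule.injective_subtype _
  · apply SnakeLemma.exact_δ'_left (π₂ := LinearMap.lTensor X (fc R Y))
    · exact c2
    · rw [LinearMap.lTensor_comp_rTensor, ← LinearMap.rTensor_comp_lTensor]
    · exact LinearMap.lTensor_surjective _ (fc_surj R Y)

lemma exists_delta1 (f : X' →ₗ[R] X) (g : X →ₗ[R] X'') (hf : Injective f) (hg : Surjective g)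
    (h : Exact f g) : ∃ δ : T0 R X'' (Syz R Y) →ₗ[R] T0 R X' Y, Exact (map0 (Syz R Y) g) δ ∧
      Exact δ (map0 Y f) := by
  obtain ⟨δ, h1, h2⟩ := exists_delta0 (Y := Syz R Y) f g hf hg h
  have inj : Injective (LinearMap.rTensor (Y →₀ R) f) :=
      Module.Flat.rTensor_preserves_injective_linearMap _ hf
  have key : ∀ s : X' ⊗[R] Syz R Y, LinearMap.rTensor (Syz R Y) f s = 0 → s ∈ T0 R X' Y := by
    intro s hs
    simp only [T0, LinearMap.mem_ker]
    apply inj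
    rw [map_zero, ← LinearMap.comp_apply, LinearMap.rTensor_comp_lTensor,
      ← LinearMap.lTensor_comp_rTensor, LinearMap.comp_apply, hs, map_zero]
  refine ⟨δ.codRestrict _ (fun t => key _ ((h2 _).2 ⟨t, rfl⟩)), ?_, ?_⟩
  · intro t
    rw [← h1 t]
    exact ⟨fun h => congrArg Subtype.val h, fun h => Subtype.ext h⟩
  · intro t
    constructor
    · intro ht
      obtain ⟨s, hs⟩ := (h2 t.1).1 (congrArg Subtype.val ht)
      exact ⟨s, Subtype.ext hs⟩
    · rintro ⟨s, rfl⟩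
      exact Subtype.ext ((h2 _).2 ⟨s, rfl⟩)

end basic
end MT


namespace MT
open TensorProduct Function

section les
variable {R : Type} [CommRing R]
variable {X X' X'' Y Y' : Type} [AddCommGroup X] [Module R X] [AddCommGroup X'] [Module R X']
  [AddCommGroup X''] [Module R X''] [AddCommGroup Y] [Module R Y] [AddCommGroup Y'] [Module R Y']

noncomputable abbrev mapT (n : ℕ) (Y : Type) [AddCommGroup Y] [Module R Y] (f : X →ₗ[R] X') :
    T R n X Y →ₗ[R] T R n X' Y := map0 (syzIter R n (ModuleCat.of R Y)) f

lemma T_flat (n : ℕ) [Module.Flat R X] : Subsingleton (T R n X Y) := T0_flat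

lemma exact_mid (n : ℕ) (f : X' →ₗ[R] X) (g : X →ₗ[R] X'') (hf : Injective f) (hg : Surjective g)
    (h : Exact f g) : Exact (mapT n Y f) (mapT n Y g) := exact_mid0 f g hf hg h

lemma exists_delta (n : ℕ) (f : X' →ₗ[R] X) (g : X →ₗ[R] X'') (hf : Injective f)
    (hg : Surjective g) (h : Exact f g) : ∃ δ : T R (n+1) X'' Y →ₗ[R] T R n X' Y,
      Exact (mapT (n+1) Y g) δ ∧ Exact δ (mapT n Y f) := by
  induction n generalizing Y with
  | zero => exact exists_delta1 f g hf hg h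
  | succ n ih => exact ih (Y := Syz R Y)

lemma subsing_of_exact {A B C : Type} [AddCommGroup A] [AddCommGroup B] [AddCommGroup C]
    [Module R A] [Module R B] [Module R C] {f : A →ₗ[R] B} {g : B →ₗ[R] C} (h : Exact f g)
    (hA : Subsingleton A) (hC : Subsingleton C) : Subsingleton B := by
  refine ⟨fun a b => ?_⟩
  have : ∀ b : B, b = 0 := fun b => by
    obtain ⟨a, rfl⟩ := (h b).1 (Subsingleton.elim _ _)
    rw [Subsingleton.elim a 0, map_zero]
  rw [this a, this b]

/-- dimension shifting in the first variable -/
lemma shift (n : ℕ) (f : X' →ₗ[R] X) (g : X →ₗ[R] X'') (hf : Injective f)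
    (hg : Surjective g) (h : Exact f g) [Module.Flat R X] :
    Nonempty (T R (n+1) X'' Y ≃ₗ[R] T R n X' Y) := by
  obtain ⟨δ, h1, h2⟩ := exists_delta (Y := Y) n f g hf hg h
  have s1 : Subsingleton (T R (n+1) X Y) := T_flat _
  have s2 : Subsingleton (T R n X Y) := T_flat _
  refine ⟨LinearEquiv.ofBijective δ ⟨?_, ?_⟩⟩
  · rw [injective_iff_map_eq_zero]
    intro a ha
    obtain ⟨b, rfl⟩ := (h1 a).1 ha
    rw [Subsingleton.elim b 0, map_zero]
  · intro b
    exact (h2 b).1 (Subsingleton.elim _ _)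

lemma shift0 (f : X' →ₗ[R] X) (g : X →ₗ[R] X'') (hf : Injective f)
    (hg : Surjective g) (h : Exact f g) [Module.Flat R X] :
    Nonempty (T R 0 X'' Y ≃ₗ[R] LinearMap.ker (LinearMap.rTensor Y f)) := by
  obtain ⟨δ, h1, h2⟩ := exists_delta0 (Y := Y) f g hf hg h
  have s1 : Subsingleton (T0 R X Y) := T0_flat
  have h3 : LinearMap.ker (LinearMap.rTensor Y f) = LinearMap.range δ := h2.linearMap_ker_eq
  have inj : Injective δ := by
    rw [injective_iff_map_eq_zero]
    intro a ha
    obtain ⟨b, rfl⟩ := (h1 a).1 ha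
    rw [Subsingleton.elim b 0, map_zero]
  rw [h3]
  exact ⟨LinearEquiv.ofInjective δ inj⟩

lemma shiftSyz (n : ℕ) (X Y : Type) [AddCommGroup X] [Module R X] [AddCommGroup Y] [Module R Y] :
    Nonempty (T R (n+1) X Y ≃ₗ[R] T R n (Syz R X) Y) :=
  shift (X' := Syz R X) (X := X →₀ R) (X'' := X) (Y := Y) n (Syz R X).subtype (fc R X)
    (Submodule.injective_subtype _) (fc_surj R X) (LinearMap.exact_subtype_ker_map _)

noncomputable def congrX (n : ℕ) (Y : Type) [AddCommGroup Y] [Module R Y] (e : X ≃ₗ[R] X') :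
    T R n X Y ≃ₗ[R] T R n X' Y :=
  LinearEquiv.ofLinearMap (mapT n Y e) (mapT n Y e.symm)
    (by ext1 t; simp only [LinearMap.comp_apply, map0_comp]; simp [map0_id])
    (by ext1 t; simp only [LinearMap.comp_apply, map0_comp]; simp [map0_id])

lemma sym0 (X Y : Type) [AddCommGroup X] [Module R X] [AddCommGroup Y] [Module R Y] :
    Nonempty (T R 0 X Y ≃ₗ[R] T R 0 Y X) := by
  obtain ⟨e⟩ := shift0 (X' := Syz R X) (X := X →₀ R) (X'' := X) (Y := Y) (Syz R X).subtype
    (fc R X) (Submodule.injective_subtype _) (fc_surj R X) (LinearMap.exact_subtype_ker_map _)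
  suffices e' : (LinearMap.ker (LinearMap.rTensor Y (Syz R X).subtype)) ≃ₗ[R] T0 R Y X from
    ⟨e.trans e'⟩
  refine LinearEquiv.ofSubmodules (TensorProduct.comm R (Syz R X) Y) _ _ ?_
  change _ = LinearMap.ker (LinearMap.lTensor Y (Syz R X).subtype)
  rw [Submodule.map_equiv_eq_comap_symm]
  ext t
  simp only [Submodule.mem_comap, LinearMap.mem_ker]
  rw [← LinearMap.comm_comp_rTensor_comp_comm_eq]
  simp

lemma sym (n : ℕ) (X Y : Type) [AddCommGroup X] [Module R X] [AddCommGroup Y] [Module R Y] :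
    Nonempty (T R n X Y ≃ₗ[R] T R n Y X) := by
  induction n generalizing Y with
  | zero => exact sym0 X Y
  | succ n ih =>
    obtain ⟨e⟩ := ih (Syz R Y)
    obtain ⟨e'⟩ := shiftSyz (R := R) n Y X
    exact ⟨e.trans e'.symm⟩

lemma congrY (n : ℕ) (X : Type) [AddCommGroup X] [Module R X] (e : Y ≃ₗ[R] Y') :
    Nonempty (T R n X Y ≃ₗ[R] T R n X Y') := by
  obtain ⟨e1⟩ := sym (R := R) n X Y
  obtain ⟨e2⟩ := sym (R := R) n Y' X
  exact ⟨e1.trans ((congrX n X e).trans e2)⟩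

variable (R) in
/-- vanishing of `Tor_{n+1}` -/
def V (n : ℕ) (X Y : Type) [AddCommGroup X] [Module R X] [AddCommGroup Y] [Module R Y] : Prop :=
  Subsingleton (T R n X Y)

lemma V_symm (n : ℕ) : V R n X Y ↔ V R n Y X := by
  obtain ⟨e⟩ := sym (R := R) n X Y
  exact e.toEquiv.subsingleton_congr

lemma V_congr (n : ℕ) (e : X ≃ₗ[R] X') : V R n X Y ↔ V R n X' Y :=
  (congrX n Y e).toEquiv.subsingleton_congr

lemma V_shift (n : ℕ) (f : X' →ₗ[R] X) (g : X →ₗ[R] X'') (hf : Injective f)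
    (hg : Surjective g) (h : Exact f g) [Module.Flat R X] : V R (n+1) X'' Y ↔ V R n X' Y := by
  obtain ⟨e⟩ := shift (Y := Y) n f g hf hg h
  exact e.toEquiv.subsingleton_congr

lemma V_shift' (n : ℕ) (f : X' →ₗ[R] X) (g : X →ₗ[R] X'') (hf : Injective f)
    (hg : Surjective g) (h : Exact f g) [Module.Flat R X] : V R (n+1) Y X'' ↔ V R n Y X' := by
  rw [V_symm, V_shift n f g hf hg h, V_symm]

lemma V_shift0' (f : X' →ₗ[R] X) (g : X →ₗ[R] X'') (hf : Injective f)
    (hg : Surjective g) (h : Exact f g) [Module.Flat R X] :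
    V R 0 Y X'' ↔ Injective (LinearMap.lTensor Y f) := by
  obtain ⟨e⟩ := shift0 (Y := Y) f g hf hg h
  rw [V_symm, V, e.toEquiv.subsingleton_congr, Submodule.subsingleton_iff_eq_bot,
    LinearMap.ker_eq_bot, LinearMap.lTensor_inj_iff_rTensor_inj]

lemma V_flat (n : ℕ) [Module.Flat R X] : V R n X Y := T_flat n
lemma V_flat' (n : ℕ) [Module.Flat R X] : V R n Y X := (V_symm n).2 (T_flat n)

lemma V_mid (n : ℕ) (f : X' →ₗ[R] X) (g : X →ₗ[R] X'') (hf : Injective f)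
    (hg : Surjective g) (h : Exact f g) (h1 : V R n X' Y) (h2 : V R n X'' Y) : V R n X Y :=
  subsing_of_exact (exact_mid n f g hf hg h) h1 h2

lemma V_right (n : ℕ) (f : X' →ₗ[R] X) (g : X →ₗ[R] X'') (hf : Injective f)
    (hg : Surjective g) (h : Exact f g) (h1 : V R (n+1) X Y) (h2 : V R n X' Y) :
    V R (n+1) X'' Y := by
  obtain ⟨δ, e1, e2⟩ := exists_delta (Y := Y) n f g hf hg h
  exact subsing_of_exact e1 h1 h2

lemma V_left (n : ℕ) (f : X' →ₗ[R] X) (g : X →ₗ[R] X'') (hf : Injective f)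
    (hg : Surjective g) (h : Exact f g) (h1 : V R (n+1) X'' Y) (h2 : V R n X Y) :
    V R n X' Y := by
  obtain ⟨δ, e1, e2⟩ := exists_delta (Y := Y) n f g hf hg h
  exact subsing_of_exact e2 h1 h2

/-- finiteness -/
lemma T_finite [IsNoetherianRing R] (n : ℕ) (X Y : Type) [AddCommGroup X] [Module R X]
    [AddCommGroup Y] [Module R Y] [Module.Finite R X] [Module.Finite R Y] :
    Module.Finite R (T R n X Y) := by
  induction n generalizing X with
  | zero =>
    obtain ⟨k, g, hg⟩ := Module.Finite.exists_fin' R X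
    obtain ⟨e⟩ := shift0 (Y := Y) (LinearMap.ker g).subtype g (Submodule.injective_subtype _)
      hg (LinearMap.exact_subtype_ker_map _)
    have hN : IsNoetherian R ((LinearMap.ker g) ⊗[R] Y) := by
      have : Module.Finite R (LinearMap.ker g) := Module.IsNoetherian.finite _ _
      have : Module.Finite R ((LinearMap.ker g) ⊗[R] Y) := Module.Finite.tensorProduct _ _ _
      exact isNoetherian_of_isNoetherianRing_of_finite R ((LinearMap.ker g) ⊗[R] Y)
    have : Module.Finite R (LinearMap.ker (LinearMap.rTensor Y (LinearMap.ker g).subtype)) :=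
      Module.IsNoetherian.finite _ _
    exact Module.Finite.equiv e.symm
  | succ n ih =>
    obtain ⟨k, g, hg⟩ := Module.Finite.exists_fin' R X
    obtain ⟨e⟩ := shift (Y := Y) n (LinearMap.ker g).subtype g (Submodule.injective_subtype _)
      hg (LinearMap.exact_subtype_ker_map _)
    have := ih (LinearMap.ker g)
    exact Module.Finite.equiv e.symm

lemma T_killed (n : ℕ) (r : R) (hr : ∀ x : X, r • x = 0) (t : T R n X Y) : r • t = 0 := by
  have : r • (LinearMap.id : X →ₗ[R] X) = 0 := by ext x; simp [hr]
  rw [← map0_smul, this]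
  ext; simp

lemma T_killed' (n : ℕ) (r : R) (hr : ∀ x : Y, r • x = 0) (t : T R n X Y) : r • t = 0 := by
  obtain ⟨e⟩ := sym (R := R) n X Y
  apply e.injective
  rw [map_smul, T_killed n r hr, map_zero]

lemma V_retract (n : ℕ) (f : X →ₗ[R] X') (g : X' →ₗ[R] X) (h : g ∘ₗ f = LinearMap.id)
    (h1 : V R n X' Y) : V R n X Y := by
  have : ∀ t : T R n X Y, t = 0 := fun t => by
    have := map0_comp f g t
    rw [h, map0_id] at this
    rw [← this]
    have h2 : map0 (syzIter R n (ModuleCat.of R Y)) f t = 0 := by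
      have := h1
      unfold V at this
      exact Subsingleton.elim _ _
    rw [h2, map_zero]
  exact ⟨fun a b => (this a).trans (this b).symm⟩

end les
end MT


namespace MT
open TensorProduct Function

section link
variable {R : Type} [CommRing R]

lemma V_res (X : Type) [AddCommGroup X] [Module R X] (n : ℕ) :
    ∀ (Y : Type) [AddCommGroup Y] [Module R Y] (P : ℕ → ModuleCat.{0} R)
    (_ : ∀ n, Module.Flat R (P n)) (d : ∀ n, P (n+1) →ₗ[R] P n) (π : P 0 →ₗ[R] Y)
    (_ : Surjective π) (_ : Exact (d 0) π) (_ : ∀ n, Exact (d (n+1)) (d n)),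
    V R n X Y ↔ Exact (LinearMap.lTensor X (d (n+1))) (LinearMap.lTensor X (d n)) := by
  induction n with
  | zero =>
    intro Y _ _ P hP d π hπ h0 h
    have hflat := hP 0
    rw [V_shift0' (X' := LinearMap.ker π) (X := P 0) (X'' := Y) (LinearMap.ker π).subtype π
      (Submodule.injective_subtype _) hπ (LinearMap.exact_subtype_ker_map _)]
    let d' : P 1 →ₗ[R] LinearMap.ker π := (d 0).codRestrict _ (fun x => (h0 _).2 ⟨x, rfl⟩)
    have hd' : (LinearMap.ker π).subtype ∘ₗ d' = d 0 := rfl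
    have sd' : Surjective d' := by
      rintro ⟨z, hz⟩
      obtain ⟨x, hx⟩ := (h0 z).1 hz
      exact ⟨x, Subtype.ext hx⟩
    have ed' : Exact (d 1) d' := by
      intro x
      rw [← h 0 x]
      exact ⟨fun h => congrArg Subtype.val h, fun h => Subtype.ext h⟩
    have e := lTensor_exact X ed' sd'
    have se : Surjective (LinearMap.lTensor X d') := LinearMap.lTensor_surjective _ sd'
    rw [← hd', LinearMap.lTensor_comp]
    constructor
    · intro hi x
      rw [← e x, LinearMap.comp_apply, ← map_zero (LinearMap.lTensor X (LinearMap.ker π).subtype)]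
      exact hi.eq_iff
    · intro hx
      rw [injective_iff_map_eq_zero]
      intro a ha
      obtain ⟨b, rfl⟩ := se a
      exact (e b).2 ((hx b).1 ha)
  | succ n ih =>
    intro Y _ _ P hP d π hπ h0 h
    have hflat := hP 0
    rw [V_shift' (X' := LinearMap.ker π) (X := P 0) (X'' := Y) n (LinearMap.ker π).subtype π
      (Submodule.injective_subtype _) hπ (LinearMap.exact_subtype_ker_map _)]
    let d' : P 1 →ₗ[R] LinearMap.ker π := (d 0).codRestrict _ (fun x => (h0 _).2 ⟨x, rfl⟩)
    have sd' : Surjective d' := by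
      rintro ⟨z, hz⟩
      obtain ⟨x, hx⟩ := (h0 z).1 hz
      exact ⟨x, Subtype.ext hx⟩
    have ed' : Exact (d 1) d' := by
      intro x
      rw [← h 0 x]
      exact ⟨fun h => congrArg Subtype.val h, fun h => Subtype.ext h⟩
    exact ih (LinearMap.ker π) (fun n => P (n+1)) (fun n => hP (n+1)) (fun n => d (n+1)) d' sd' ed'
      (fun n => h (n+1))

lemma res_data {Y : Type} [AddCommGroup Y] [Module R Y]
    (P : ProjectiveResolution (ModuleCat.of R Y)) :
    (∀ n, Module.Projective R (P.complex.X n)) ∧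
    (Surjective (P.π.f 0).hom) ∧ Exact (P.complex.d 1 0).hom (P.π.f 0).hom ∧
    ∀ n, Exact (P.complex.d (n+2) (n+1)).hom (P.complex.d (n+1) n).hom := by
  refine ⟨fun n => ?_, ?_, ?_, fun n => ?_⟩
  · exact (IsProjective.iff_projective _).2 (P.projective n)
  · exact (ModuleCat.epi_iff_surjective (P.π.f 0)).1 inferInstance
  · have := P.exact₀
    rw [ShortComplex.ShortExact.moduleCat_exact_iff_function_exact] at this
    exact this
  · have := P.exact_succ n
    rw [ShortComplex.ShortExact.moduleCat_exact_iff_function_exact] at this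
    exact this

theorem link {X Y : Type} [AddCommGroup X] [Module R X] [AddCommGroup Y] [Module R Y] (n : ℕ) :
    TorVanish R X Y (n+1) ↔ V R n X Y := by
  let P := projectiveResolution (ModuleCat.of R Y)
  obtain ⟨h1, h2, h3, h4⟩ := res_data P
  have := V_res X n Y (fun n => P.complex.X n) (fun n => inferInstance)
    (fun n => (P.complex.d (n+1) n).hom) (P.π.f 0).hom h2 h3 h4
  rw [this]
  let F := (MonoidalCategory.tensoringLeft (ModuleCat.{0} R)).obj (ModuleCat.of R X)
  have e : ((Tor (ModuleCat R) (n+1)).obj (ModuleCat.of R X)).obj (ModuleCat.of R Y) ≅ _ :=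
    P.isoLeftDerivedObj F (n+1)
  have e1 : TorVanish R X Y (n+1) ↔ Limits.IsZero
      (((Tor (ModuleCat R) (n+1)).obj (ModuleCat.of R X)).obj (ModuleCat.of R Y)) :=
    ModuleCat.isZero_iff_subsingleton.symm
  rw [e1, e.isZero_iff]
  have e2 := HomologicalComplex.exactAt_iff_isZero_homology
    ((F.mapHomologicalComplex (ComplexShape.down ℕ)).obj P.complex) (n+1)
  refine e2.symm.trans ?_
  rw [HomologicalComplex.exactAt_iff' _ (n+2) (n+1) n (by simp only [ChainComplex.prev]; rfl) (by simp),
    ShortComplex.ShortExact.moduleCat_exact_iff_function_exact]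
  rfl

lemma pd_shift {X' X X'' : Type} [AddCommGroup X] [Module R X] [AddCommGroup X'] [Module R X']
  [AddCommGroup X''] [Module R X''] (f : X' →ₗ[R] X) (g : X →ₗ[R] X'') (hf : Injective f)
    (hg : Surjective g) (h : Exact f g) [Module.Projective R X] (n : ℕ) :
    HasProjectiveDimensionLT (ModuleCat.of R X'') (n+2) ↔
      HasProjectiveDimensionLT (ModuleCat.of R X') (n+1) := by
  let S : ShortComplex (ModuleCat.{0} R) := ShortComplex.mk (ModuleCat.ofHom f) (ModuleCat.ofHom g)
    (by ext x; exact (h _).2 ⟨x, rfl⟩)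
  have hS : S.ShortExact :=
    { exact := (ShortComplex.ShortExact.moduleCat_exact_iff_function_exact S).2 h
      mono_f := (ModuleCat.mono_iff_injective _).2 hf
      epi_g := (ModuleCat.epi_iff_surjective _).2 hg }
  exact hS.hasProjectiveDimensionLT_X₃_iff n ((IsProjective.iff_projective X).1 inferInstance)

lemma ext_res (Z : Type) [AddCommGroup Z] [Module R Z] (i : ℕ) :
    ∀ (n : ℕ) (_ : n ≤ i) (Y : Type) [AddCommGroup Y] [Module R Y] (P : ℕ → ModuleCat.{0} R)
    (_ : ∀ n, Module.Projective R (P n)) (d : ∀ n, P (n+1) →ₗ[R] P n) (π : P 0 →ₗ[R] Y)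
    (_ : Surjective π) (_ : Exact (d 0) π) (_ : ∀ n, Exact (d (n+1)) (d n))
    (_ : HasProjectiveDimensionLT (ModuleCat.of R Y) (n+1)) (φ : P (i+1) →ₗ[R] Z)
    (_ : φ ∘ₗ d (i+1) = 0), ∃ ψ : P i →ₗ[R] Z, ψ ∘ₗ d i = φ := by
  induction i with
  | zero =>
    intro n hn Y _ _ P hP d π hπ h0 h hpd φ hφ
    obtain rfl : n = 0 := by omega
    have hY : Module.Projective R Y := by
      rw [IsProjective.iff_projective]
      exact projective_iff_hasProjectiveDimensionLT_one.2 hpd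
    obtain ⟨s, hs⟩ := Module.projective_lifting_property π LinearMap.id hπ
    have hs' : ∀ y, π (s y) = y := fun y => LinearMap.congr_fun hs y
    let d' : P 1 →ₗ[R] LinearMap.ker π := (d 0).codRestrict _ (fun x => (h0 _).2 ⟨x, rfl⟩)
    have sd' : Surjective d' := by
      rintro ⟨z, hz⟩
      obtain ⟨x, hx⟩ := (h0 z).1 hz
      exact ⟨x, Subtype.ext hx⟩
    have hk : LinearMap.ker d' ≤ LinearMap.ker φ := by
      intro x hx
      have : d 0 x = 0 := congrArg Subtype.val hx
      obtain ⟨y, rfl⟩ := (h 0 x).1 this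
      exact LinearMap.congr_fun hφ y
    let ψ0 : LinearMap.ker π →ₗ[R] Z :=
      (LinearMap.ker d').liftQ φ hk ∘ₗ (d'.quotKerEquivOfSurjective sd').symm.toLinearMap
    have hψ0 : ∀ x, ψ0 (d' x) = φ x := by
      intro x
      have : (d'.quotKerEquivOfSurjective sd').symm (d' x) = (LinearMap.ker d').mkQ x := by
        rw [LinearEquiv.symm_apply_eq]; rfl
      simp only [ψ0, LinearMap.comp_apply, LinearEquiv.coe_coe, this]
      rfl
    let r : P 0 →ₗ[R] LinearMap.ker π := (LinearMap.id - s ∘ₗ π).codRestrict _ (fun x => by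
      simp [hs'])
    refine ⟨ψ0 ∘ₗ r, ?_⟩
    ext x
    have : r (d 0 x) = d' x := by
      apply Subtype.ext
      have : π (d 0 x) = 0 := (h0 _).2 ⟨x, rfl⟩
      change d 0 x - s (π (d 0 x)) = d 0 x
      rw [this, map_zero, sub_zero]
    rw [LinearMap.comp_apply, LinearMap.comp_apply, this, hψ0]
  | succ i ih =>
    intro n hn Y _ _ P hP d π hπ h0 h hpd φ hφ
    let d' : P 1 →ₗ[R] LinearMap.ker π := (d 0).codRestrict _ (fun x => (h0 _).2 ⟨x, rfl⟩)
    have sd' : Surjective d' := by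
      rintro ⟨z, hz⟩
      obtain ⟨x, hx⟩ := (h0 z).1 hz
      exact ⟨x, Subtype.ext hx⟩
    have ed' : Exact (d 1) d' := by
      intro x
      rw [← h 0 x]
      exact ⟨fun h => congrArg Subtype.val h, fun h => Subtype.ext h⟩
    have hpd2 : HasProjectiveDimensionLT (ModuleCat.of R Y) (n - 1 + 2) :=
      hasProjectiveDimensionLT_of_ge _ (n+1) _ (by omega)
    rw [pd_shift (LinearMap.ker π).subtype π (Submodule.injective_subtype _) hπ
      (LinearMap.exact_subtype_ker_map _)] at hpd2
    exact ih (n-1) (by omega) (LinearMap.ker π) (fun n => P (n+1)) (fun n => hP (n+1))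
      (fun n => d (n+1)) d' sd' ed' (fun n => h (n+1)) hpd2 φ hφ

theorem pdFinite {Y : Type} [AddCommGroup Y] [Module R Y] (n : ℕ)
    (h : HasProjectiveDimensionLT (ModuleCat.of R Y) (n+1)) : ProjDimFinite R Y := by
  refine ⟨n+1, fun Z i hi => ?_⟩
  obtain ⟨i, rfl⟩ : ∃ j, i = j+1 := ⟨i-1, by omega⟩
  let P := projectiveResolution (ModuleCat.of R Y)
  obtain ⟨h1, h2, h3, h4⟩ := res_data P
  have key := ext_res Z i n (by omega) Y (fun n => P.complex.X n) h1
    (fun n => (P.complex.d (n+1) n).hom) (P.π.f 0).hom h2 h3 h4 h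
  rw [ExtVanish, ← ModuleCat.isZero_iff_subsingleton]
  refine Limits.IsZero.of_iso ?_ (P.isoExt (R := R) (i+1) Z)
  rw [← HomologicalComplex.exactAt_iff_isZero_homology,
    HomologicalComplex.exactAt_iff' _ i (i+1) (i+2) (by simp) (by simp only [CochainComplex.next]; rfl),
    ShortComplex.moduleCat_exact_iff]
  intro (φ : P.complex.X (i+1) ⟶ Z) hφ
  have hφ' : P.complex.d (i+2) (i+1) ≫ φ = 0 := hφ
  obtain ⟨ψ, hψ⟩ := key φ.hom (by
    have := congrArg ModuleCat.Hom.hom hφ'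
    exact this)
  exact ⟨ModuleCat.ofHom ψ, ModuleCat.hom_ext hψ⟩

lemma pd_of_V [IsNoetherianRing R] (n : ℕ) : ∀ (Y : Type) [AddCommGroup Y] [Module R Y]
    [Module.Finite R Y] (_ : ∀ (X : Type) [AddCommGroup X] [Module R X] [Module.Finite R X],
      V R n X Y), HasProjectiveDimensionLT (ModuleCat.of R Y) (n+1) := by
  induction n with
  | zero =>
    intro Y _ _ _ h
    have hf : Module.Flat R Y := by
      rw [Module.Flat.iff_lTensor_injective']
      intro I
      have := h (R ⧸ I)
      rw [V_symm, V_shift0' (X' := I) (X := R) (X'' := R ⧸ I) (Submodule.subtype I)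
        (Submodule.mkQ I) (Submodule.injective_subtype _) (Submodule.mkQ_surjective _)
        (LinearMap.exact_subtype_mkQ I)] at this
      exact this
    have : Module.FinitePresentation R Y := Module.finitePresentation_of_finite R Y
    have : Module.Projective R Y := Module.Flat.projective_of_finitePresentation
    rw [IsProjective.iff_projective] at this
    exact projective_iff_hasProjectiveDimensionLT_one.1 this
  | succ n ih =>
    intro Y _ _ _ h
    obtain ⟨k, g, hg⟩ := Module.Finite.exists_fin' R Y
    rw [pd_shift (LinearMap.ker g).subtype g (Submodule.injective_subtype _) hg
      (LinearMap.exact_subtype_ker_map _)]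
    apply ih
    intro X _ _ _
    rw [← V_shift' n (LinearMap.ker g).subtype g (Submodule.injective_subtype _) hg
      (LinearMap.exact_subtype_ker_map _)]
    exact h X

theorem pdFinite_of_V [IsNoetherianRing R] (n : ℕ) (Y : Type) [AddCommGroup Y] [Module R Y]
    [Module.Finite R Y] (h : ∀ (X : Type) [AddCommGroup X] [Module R X] [Module.Finite R X],
      V R n X Y) : ProjDimFinite R Y := pdFinite n (pd_of_V n Y h)

end link
end MT


namespace MT
open TensorProduct Function

section cor
variable {A A' : Type} [CommRing A] [CommRing A'] [Algebra A A']

lemma bc_exact {K F L : Type} [AddCommGroup K] [Module A K] [AddCommGroup F] [Module A F]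
    [AddCommGroup L] [Module A L] [Module.Flat A F] (i : K →ₗ[A] F) (g : F →ₗ[A] L)
    (hi : Injective i) (hg : Surjective g) (h : Exact i g) (hV : V A 0 A' L) :
    Injective (i.baseChange A') ∧ Surjective (g.baseChange A') ∧
      Exact (i.baseChange A') (g.baseChange A') := by
  rw [LinearMap.baseChange_eq_ltensor, LinearMap.baseChange_eq_ltensor]
  refine ⟨(V_shift0' i g hi hg h).1 hV, LinearMap.lTensor_surjective A' hg, lTensor_exact A' h hg⟩

lemma bc_inj (M : Type) [AddCommGroup M] [Module A M] [Module A' M] [IsScalarTower A A' M]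
    {K F : Type} [AddCommGroup K] [Module A K] [AddCommGroup F] [Module A F] (i : K →ₗ[A] F) :
    Injective (i.lTensor M) ↔ Injective ((i.baseChange A').lTensor M) := by
  let e1 := AlgebraTensorModule.cancelBaseChange A A' A' M K
  let e2 := AlgebraTensorModule.cancelBaseChange A A' A' M F
  have : ∀ t, e2 (LinearMap.lTensor M (i.baseChange A') t) = LinearMap.lTensor M i (e1 t) := by
    intro t
    induction t with
    | zero => simp
    | add x y hx hy => simp only [map_add, hx, hy]
    | tmul m t =>
      induction t with
      | zero => simp
      | add x y hx hy => simp only [map_add, hx, hy, tmul_add]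
      | tmul a t => simp [e1, e2]
  have h4 : (LinearMap.lTensor M i : _ → _) =
      e2 ∘ (LinearMap.lTensor M (i.baseChange A')) ∘ e1.symm := by
    funext t
    simp [this]
  rw [h4, e2.injective.of_comp_iff, Injective.of_comp_iff' _ e1.symm.bijective]

lemma bc_both (M : Type) [AddCommGroup M] [Module A M] [Module A' M] [IsScalarTower A A' M]
    {K F L : Type} [AddCommGroup K] [Module A K] [AddCommGroup F] [Module A F]
    [AddCommGroup L] [Module A L] [Module.Flat A F] (i : K →ₗ[A] F) (g : F →ₗ[A] L)
    (hi : Injective i) (hg : Surjective g) (h : Exact i g) (hV : V A 0 A' L) :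
    (V A 0 M L ↔ V A' 0 M (A' ⊗[A] L)) ∧ ∀ n, ((V A n M K ↔ V A' n M (A' ⊗[A] K)) →
      (V A (n+1) M L ↔ V A' (n+1) M (A' ⊗[A] L))) := by
  obtain ⟨h1, h2, h3⟩ := bc_exact i g hi hg h hV
  constructor
  · rw [V_shift0' i g hi hg h, V_shift0' _ _ h1 h2 h3]
    exact bc_inj M i
  · intro n ih
    rw [V_shift' n i g hi hg h, V_shift' n _ _ h1 h2 h3]
    exact ih

lemma baseChange_V (M : Type) [AddCommGroup M] [Module A M] [Module A' M] [IsScalarTower A A' M]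
    (n : ℕ) : ∀ (L : Type) [AddCommGroup L] [Module A L] (_ : ∀ n, V A n A' L),
    V A n M L ↔ V A' n M (A' ⊗[A] L) := by
  induction n with
  | zero =>
    intro L _ _ h
    exact (bc_both M (K := Syz A L) (F := L →₀ A) (L := L) (Syz A L).subtype (fc A L)
      (Submodule.injective_subtype (Syz A L)) (fc_surj A L)
      (LinearMap.exact_subtype_ker_map _) (h 0)).1
  | succ n ih =>
    intro L _ _ h
    exact (bc_both M (K := Syz A L) (F := L →₀ A) (L := L) (Syz A L).subtype (fc A L)
      (Submodule.injective_subtype (Syz A L)) (fc_surj A L)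
      (LinearMap.exact_subtype_ker_map _) (h 0)).2 n (ih _ (fun n => h (n+1)))

variable (f : A) (hs : Surjective (algebraMap A A')) (hk : ∀ a, algebraMap A A' a = 0 ↔ f ∣ a)
    (hf : ∀ a, f * a = 0 → a = 0)
include hs hk hf

lemma mul_exact : Injective (LinearMap.lsmul A A f) ∧ Surjective (Algebra.linearMap A A') ∧
    Exact (LinearMap.lsmul A A f) (Algebra.linearMap A A') := by
  refine ⟨?_, hs, ?_⟩
  · rw [injective_iff_map_eq_zero]
    exact hf
  · intro a
    rw [Algebra.linearMap_apply, hk]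
    exact ⟨fun ⟨b, hb⟩ => ⟨b, hb.symm⟩, fun ⟨b, hb⟩ => ⟨b, hb.symm⟩⟩

variable (M N : Type) [AddCommGroup M] [Module A M] [Module A' M] [IsScalarTower A A' M]
  [AddCommGroup N] [Module A N] [Module A' N] [IsScalarTower A A' N]

lemma cor_exists : ∃ _ : LinearMap.ker ((Syz A N).subtype.baseChange A') ≃ₗ[A'] N,
    ∃ p : A' ⊗[A] (N →₀ A) →ₗ[A'] N, Surjective p ∧
      Exact ((Syz A N).subtype.baseChange A') p := by
  obtain ⟨h1, h2, h3⟩ := mul_exact f hs hk hf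
  obtain ⟨e0⟩ := shift0 (Y := N) (LinearMap.lsmul A A f) (Algebra.linearMap A A') h1 h2 h3
  have hfN : ∀ x : N, f • x = 0 := fun x => by
    rw [← algebraMap_smul A', (hk f).2 dvd_rfl, zero_smul]
  have htop : LinearMap.ker (LinearMap.rTensor N (LinearMap.lsmul A A f)) = ⊤ := by
    rw [LinearMap.ker_eq_top]
    ext x
    have : (f • (1 : A)) ⊗ₜ[A] x = 0 := by rw [smul_tmul, hfN, tmul_zero]
    simpa using this
  let e1 : T A 0 A' N ≃ₗ[A] N := e0.trans ((LinearEquiv.ofTop _ htop).trans (TensorProduct.lid A N))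
  have heq : T0 A A' N = (LinearMap.ker ((Syz A N).subtype.baseChange A')).restrictScalars A := rfl
  let e2 : LinearMap.ker ((Syz A N).subtype.baseChange A') ≃ₗ[A] N :=
    (LinearEquiv.ofEq _ _ heq.symm).trans e1
  refine ⟨e2.extendScalarsOfSurjective hs, ?_⟩
  let q : A' ⊗[A] N →ₗ[A'] N := AlgebraTensorModule.lift
    (LinearMap.toSpanSingleton A' (N →ₗ[A] N) LinearMap.id)
  have hq : ∀ (a : A') (x : N), q (a ⊗ₜ x) = a • x := fun a x => by simp [q]
  have hqs : Surjective q := fun x => ⟨1 ⊗ₜ x, by simp [hq]⟩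
  have hqi : Injective q := by
    have : ∀ t : A' ⊗[A] N, t = 1 ⊗ₜ q t := by
      intro t
      induction t with
      | zero => simp
      | add x y hx hy => rw [map_add, tmul_add, ← hx, ← hy]
      | tmul a x =>
        obtain ⟨b, rfl⟩ := hs a
        rw [hq, algebraMap_smul, ← smul_tmul, Algebra.algebraMap_eq_smul_one]
    intro s t hst
    rw [this s, this t, hst]
  refine ⟨q ∘ₗ (fc A N).baseChange A', ?_, ?_⟩
  · exact hqs.comp (LinearMap.lTensor_surjective A' (fc_surj A N))
  · have h := lTensor_exact (M := Syz A N) (N := N →₀ A) (P := N) (f := (Syz A N).subtype)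
        (g := fc A N) A' (LinearMap.exact_subtype_ker_map _) (fc_surj A N)
    intro t
    rw [LinearMap.comp_apply, map_eq_zero_iff q hqi]
    exact h t

lemma cor_step (n : ℕ) : (V A' n M N → V A' (n+1) M N → V A (n+1) M N) ∧
    (V A (n+1) M N → V A' (n+2) M N → V A' n M N) ∧
    (V A (n+2) M N → V A' n M N → V A' (n+2) M N) := by
  obtain ⟨e, p, hp, hep⟩ := cor_exists f hs hk hf N
  obtain ⟨h1, h2, h3⟩ := mul_exact f hs hk hf
  set φ := (Syz A N).subtype.baseChange A' with hφ
  have hL : ∀ n, V A n A' (Syz A N) := fun n =>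
    (V_shift (Y := N) n (LinearMap.lsmul A A f) (Algebra.linearMap A A') h1 h2 h3).2 (V_flat n)
  have hE : ∀ n, V A (n+1) M N ↔ V A' n (A' ⊗[A] Syz A N) M := fun n =>
    (baseChange_V M n (Syz A N) hL).trans (V_symm n)
  have hZ : ∀ n, V A' (n+1) M N ↔ V A' n (LinearMap.range φ) M := fun n => by
    have h5 : Exact (LinearMap.range φ).subtype p := by
      rw [← hep.linearMap_ker_eq]; exact LinearMap.exact_subtype_ker_map _
    rw [V_shift' (X' := LinearMap.range φ) n (LinearMap.range φ).subtype p (Submodule.injective_subtype _) hp h5, V_symm]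
  have hN : ∀ n, V A' n M N ↔ V A' n (LinearMap.ker φ) M := fun n => by
    rw [V_symm, V_congr (X' := LinearMap.ker φ) n e.symm]
  have s1 : Injective (LinearMap.ker φ).subtype := Submodule.injective_subtype _
  have s2 : Surjective φ.rangeRestrict := φ.surjective_rangeRestrict
  have s3 : Exact (LinearMap.ker φ).subtype φ.rangeRestrict := by
    intro x
    rw [← LinearMap.exact_subtype_ker_map φ x]
    exact ⟨fun h => congrArg Subtype.val h, fun h => Subtype.ext h⟩
  refine ⟨fun a b => ?_, fun a b => ?_, fun a b => ?_⟩
  · rw [hE]; exact V_mid n _ _ s1 s2 s3 ((hN n).1 a) ((hZ n).1 b)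
  · rw [hN]; exact V_left n _ _ s1 s2 s3 ((hZ (n+1)).1 b) ((hE n).1 a)
  · rw [hZ]; exact V_right n _ _ s1 s2 s3 ((hE (n+1)).1 a) ((hN n).1 b)

end cor
end MT


namespace MT
open TensorProduct Function RingTheory.Sequence
open scoped Pointwise

section chain

lemma surjTensor {A S : Type} [CommRing A] [CommRing S] [Algebra A S]
    (hs : Surjective (algebraMap A S)) (N : Type) [AddCommGroup N] [Module A N] [Module S N]
    [IsScalarTower A S N] : Nonempty (S ⊗[A] N ≃ₗ[S] N) := by
  let q : S ⊗[A] N →ₗ[S] N := AlgebraTensorModule.lift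
    (LinearMap.toSpanSingleton S (N →ₗ[A] N) LinearMap.id)
  have hq : ∀ (a : S) (x : N), q (a ⊗ₜ x) = a • x := fun a x => by simp [q]
  have hqs : Surjective q := fun x => ⟨1 ⊗ₜ x, by simp [hq]⟩
  have hqi : Injective q := by
    have : ∀ t : S ⊗[A] N, t = 1 ⊗ₜ q t := by
      intro t
      induction t with
      | zero => simp
      | add x y hx hy => rw [map_add, tmul_add, ← hx, ← hy]
      | tmul a x =>
        obtain ⟨b, rfl⟩ := hs a
        rw [hq, algebraMap_smul, ← smul_tmul, Algebra.algebraMap_eq_smul_one]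
    intro s t hst
    rw [this s, this t, hst]
  exact ⟨LinearEquiv.ofBijective q ⟨hqi, hqs⟩⟩

lemma V_bij {A S : Type} [CommRing A] [CommRing S] [Algebra A S]
    (hb : Bijective (algebraMap A S)) (M N : Type) [AddCommGroup M] [Module A M] [Module S M]
    [IsScalarTower A S M] [AddCommGroup N] [Module A N] [Module S N]
    [IsScalarTower A S N] (n : ℕ) : V A n M N ↔ V S n M N := by
  have : Module.Flat A S := Module.Flat.of_linearEquiv
    (LinearEquiv.ofBijective (Algebra.linearMap A S) hb).symm
  rw [baseChange_V (A' := S) M n N (fun n => V_flat n)]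
  obtain ⟨e⟩ := surjTensor hb.2 N
  rw [V_symm, V_congr n e, V_symm]

theorem chain {S : Type} [CommRing S] (M N : Type) [AddCommGroup M] [Module S M]
    [AddCommGroup N] [Module S N] (c : ℕ) :
    ∀ (A : Type) [CommRing A] [Algebra A S] [Module A M] [Module A N]
    [IsScalarTower A S M] [IsScalarTower A S N] (fs : List A)
    (_ : fs.length = c) (_ : IsWeaklyRegular A fs) (_ : Surjective (algebraMap A S))
    (_ : ∀ a, algebraMap A S a = 0 ↔ a ∈ Ideal.ofList fs),
    (∀ a e, (∀ i, a ≤ i → i ≤ a + c + e → V S i M N) →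
      ∀ i, a + c ≤ i → i ≤ a + c + e → V A i M N) ∧
    (∀ τ a, τ ≤ a → (∀ i, τ + c ≤ i → V A i M N) → (∀ i, a ≤ i → i ≤ a + c → V S i M N) →
      ∀ i, τ ≤ i → V S i M N) := by
  induction c with
  | zero =>
    intro A _ _ _ _ _ _ fs hl hw hs hk
    obtain rfl := List.length_eq_zero_iff.1 hl
    have hb : Bijective (algebraMap A S) := by
      refine ⟨?_, hs⟩
      rw [injective_iff_map_eq_zero]
      intro a ha
      simpa using (hk a).1 ha
    have key := V_bij hb M N
    refine ⟨fun a e h i h1 h2 => (key i).2 (h i (by omega) (by omega)), fun τ a _ h _ i hi =>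
      (key i).1 (h i (by omega))⟩
  | succ c ih =>
    intro A _ _ _ _ _ _ fs hl hw hs hk
    obtain ⟨f, fs, rfl⟩ : ∃ f fs', fs = f :: fs' := by
      cases fs with
      | nil => simp at hl
      | cons f fs => exact ⟨f, fs, rfl⟩
    obtain ⟨hf, hw⟩ := (isWeaklyRegular_cons_iff A f fs).1 hw
    have h0 : ∀ a : A, a ∈ Ideal.span {f} → algebraMap A S a = 0 := fun a ha => by
      rw [hk, Ideal.ofList_cons]
      exact Ideal.mem_sup_left ha
    let φ : (A ⧸ Ideal.span {f}) →+* S := Ideal.Quotient.lift (Ideal.span {f}) (algebraMap A S) h0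
    let _ : Algebra (A ⧸ Ideal.span {f}) S := φ.toAlgebra
    let _ : Module (A ⧸ Ideal.span {f}) M := Module.compHom M φ
    let _ : Module (A ⧸ Ideal.span {f}) N := Module.compHom N φ
    have : IsScalarTower (A ⧸ Ideal.span {f}) S M := ⟨fun a s m => mul_smul (φ a) s m⟩
    have : IsScalarTower (A ⧸ Ideal.span {f}) S N := ⟨fun a s m => mul_smul (φ a) s m⟩
    have : IsScalarTower A (A ⧸ Ideal.span {f}) M := IsScalarTower.of_algebraMap_smul
      (fun a m => algebraMap_smul S a m)
    have : IsScalarTower A (A ⧸ Ideal.span {f}) N := IsScalarTower.of_algebraMap_smul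
      (fun a m => algebraMap_smul S a m)
    have hmk : Surjective (algebraMap A (A ⧸ Ideal.span {f})) := Ideal.Quotient.mk_surjective
    have hs' : Surjective (algebraMap (A ⧸ Ideal.span {f}) S) := fun s => by
      obtain ⟨a, rfl⟩ := hs s
      exact ⟨Ideal.Quotient.mk _ a, rfl⟩
    have hw' : IsWeaklyRegular (A ⧸ Ideal.span {f})
        (fs.map (algebraMap A (A ⧸ Ideal.span {f}))) := by
      rw [isWeaklyRegular_map_algebraMap_iff]
      have heq : (f • (⊤ : Submodule A A)) = Ideal.span {f} := by
        rw [← Submodule.ideal_span_singleton_smul]; simp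
      exact ((Submodule.quotEquivOfEq _ _ heq).isWeaklyRegular_congr fs).1 hw
    have hk' : ∀ a, algebraMap (A ⧸ Ideal.span {f}) S a = 0 ↔
        a ∈ Ideal.ofList (fs.map (algebraMap A (A ⧸ Ideal.span {f}))) := by
      intro a
      obtain ⟨a, rfl⟩ := Ideal.Quotient.mk_surjective a
      have h1 : algebraMap (A ⧸ Ideal.span {f}) S (Ideal.Quotient.mk _ a) = algebraMap A S a := rfl
      rw [h1, hk, ← Ideal.map_ofList, Ideal.ofList_cons]
      change _ ↔ (Ideal.Quotient.mk (Ideal.span {f})) a ∈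
        Ideal.map (Ideal.Quotient.mk (Ideal.span {f})) (Ideal.ofList fs)
      rw [← Ideal.mem_comap, Ideal.comap_map_of_surjective _ Ideal.Quotient.mk_surjective,
        ← RingHom.ker_eq_comap_bot, Ideal.mk_ker, sup_comm]
    obtain ⟨ih1, ih2⟩ := ih (A ⧸ Ideal.span {f}) (fs.map (algebraMap A (A ⧸ Ideal.span {f})))
      (by simpa using hl) hw' hs' hk'
    have step := cor_step (A := A) (A' := A ⧸ Ideal.span {f}) f hmk
      (fun a => by
        rw [Ideal.Quotient.algebraMap_eq, Ideal.Quotient.eq_zero_iff_mem,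
          Ideal.mem_span_singleton])
      (fun a ha => hf (by simpa using ha)) M N
    constructor
    · intro a e h i h1 h2
      have h3 := ih1 a (e+1) (fun i h1 h2 => h i h1 (by omega))
      obtain ⟨i, rfl⟩ : ∃ j, i = j+1 := ⟨i-1, by omega⟩
      exact (step i).1 (h3 i (by omega) (by omega)) (h3 (i+1) (by omega) (by omega))
    · intro τ a hτ h hS
      have h3 := ih1 a 1 (fun i h1 h2 => hS i h1 (by omega))
      have hup : ∀ j, V (A ⧸ Ideal.span {f}) (a+c+j) M N ∧
          V (A ⧸ Ideal.span {f}) (a+c+j+1) M N := by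
        intro j
        induction j with
        | zero => exact ⟨h3 _ (by omega) (by omega), h3 _ (by omega) (by omega)⟩
        | succ j hj =>
          exact ⟨hj.2, (step (a+c+j)).2.2 (h _ (by omega)) hj.1⟩
      have hdown : ∀ j, ∀ i, τ + c ≤ i → a + c ≤ i + j → V (A ⧸ Ideal.span {f}) i M N := by
        intro j
        induction j with
        | zero =>
          intro i h1 h2
          obtain ⟨k, rfl⟩ : ∃ k, i = a + c + k := ⟨i - (a+c), by omega⟩
          exact (hup k).1
        | succ j hj =>
          intro i h1 h2
          exact (step i).2.1 (h _ (by omega)) (hj (i+2) (by omega) (by omega))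
      exact ih2 τ a hτ (fun i hi => hdown a i hi (by omega)) (fun i h1 h2 => hS i h1 (by omega))

end chain
end MT


namespace MT
open TensorProduct Function RingTheory.Sequence
open scoped Pointwise

section F
variable {R : Type} [CommRing R]

abbrev Q (rs : List R) (X : Type) [AddCommGroup X] [Module R X] : Type :=
  X ⧸ (Ideal.ofList rs • (⊤ : Submodule R X))

variable {X X'' Y : Type} [AddCommGroup X] [Module R X]
  [AddCommGroup X''] [Module R X''] [AddCommGroup Y] [Module R Y]

lemma reg_inj {r : R} (hr : IsSMulRegular X r) :
    Injective (r • (LinearMap.id : X →ₗ[R] X)) := fun a b h => hr (by simpa using h)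

lemma reg_exact (r : R) :
    Exact (r • (LinearMap.id : X →ₗ[R] X)) (r • (⊤ : Submodule R X)).mkQ := by
  intro x
  rw [Submodule.mkQ_apply, Submodule.Quotient.mk_eq_zero, Submodule.mem_smul_pointwise_iff_exists]
  simp

lemma reg_V {r : R} (hr : IsSMulRegular X r) (n : ℕ) (h1 : V R (n+1) X Y) (h2 : V R n X Y) :
    V R (n+1) (QuotSMulTop r X) Y :=
  V_right n _ _ (reg_inj hr) (Submodule.mkQ_surjective _) (reg_exact r) h1 h2

lemma reg_VI {r : R} (hr : IsSMulRegular X r) (n : ℕ) (h1 : V R (n+1) (QuotSMulTop r X) Y)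
    (t : T R n X Y) (ht : r • t = 0) : t = 0 := by
  obtain ⟨δ, e1, e2⟩ := exists_delta (Y := Y) n _ _ (reg_inj hr) (Submodule.mkQ_surjective _)
    (reg_exact r)
  rw [← map0_smul] at ht
  obtain ⟨s, rfl⟩ := (e2 t).1 ht
  unfold V at h1
  rw [Subsingleton.elim s 0, map_zero]

lemma reg_VS {r : R} (hr : IsSMulRegular X r) (n : ℕ) (h1 : V R n (QuotSMulTop r X) Y)
    (t : T R n X Y) : ∃ s : T R n X Y, r • s = t := by
  have := exact_mid (Y := Y) n _ _ (reg_inj hr) (Submodule.mkQ_surjective _)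
    (reg_exact r)
  unfold V at h1
  obtain ⟨s, hs⟩ := (this t).1 (Subsingleton.elim _ _)
  exact ⟨s, by rw [← hs, map0_smul]⟩

lemma reg_ker {r : R} (hr : IsSMulRegular X r) (n : ℕ) (h1 : V R (n+1) X Y) :
    ∃ δ : T R (n+1) (QuotSMulTop r X) Y →ₗ[R] T R n X Y, Injective δ ∧
      ∀ t, r • t = 0 → ∃ s, δ s = t := by
  obtain ⟨δ, e1, e2⟩ := exists_delta (Y := Y) n _ _ (reg_inj hr) (Submodule.mkQ_surjective _)
    (reg_exact r)
  refine ⟨δ, ?_, fun t ht => ?_⟩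
  · rw [injective_iff_map_eq_zero]
    intro s hs
    obtain ⟨u, rfl⟩ := (e1 s).1 hs
    unfold V at h1
    rw [Subsingleton.elim u 0, map_zero]
  · rw [← map0_smul] at ht
    exact (e2 t).1 ht

lemma V_Q (rs : List R) : ∀ (X : Type) [AddCommGroup X] [Module R X]
    (_ : IsWeaklyRegular X rs) (n : ℕ) (_ : ∀ i, n ≤ i → i ≤ n + rs.length → V R i X Y),
    V R (n + rs.length) (Q rs X) Y := by
  induction rs with
  | nil =>
    intro X _ _ _ n h
    have := h n le_rfl (by simp)
    refine (V_congr _ ?_).1 this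
    exact (Submodule.quotEquivOfEqBot _ (by simp)).symm
  | cons r rs ih =>
    intro X _ _ hw n h
    rw [isWeaklyRegular_cons_iff] at hw
    rw [V_congr _ (Submodule.quotOfListConsSMulTopEquivQuotSMulTopInner X r rs)]
    have := ih (QuotSMulTop r X) hw.2 (n+1) (fun i h1 h2 => by
      obtain ⟨i, rfl⟩ : ∃ j, i = j+1 := ⟨i-1, by omega⟩
      refine reg_V hw.1 i (h _ (by omega) ?_) (h _ (by omega) ?_)
      · simp only [List.length_cons]; omega
      · simp only [List.length_cons]; omega)
    convert this using 1
    simp only [List.length_cons]; omega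

lemma V_QR (rs : List R) (h : IsWeaklyRegular R rs) (n : ℕ) (hn : rs.length ≤ n) :
    V R n (Q rs R) Y := by
  obtain ⟨k, rfl⟩ : ∃ k, n = k + rs.length := ⟨n - rs.length, by omega⟩
  exact V_Q rs R h k (fun i _ _ => V_flat i)

lemma trickE (n0 : ℕ) (hL : ∀ (X : Type) [AddCommGroup X] [Module R X], ∀ i, n0 ≤ i → V R i X Y)
    (rs : List R) (hk : ∀ r ∈ rs, ∃ k : ℕ, ∀ y : Y, r ^ k • y = 0) :
    ∀ (X : Type) [AddCommGroup X] [Module R X] (_ : IsWeaklyRegular X rs) (i : ℕ)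
      (_ : n0 ≤ i + rs.length), V R i X Y := by
  induction rs with
  | nil => intro X _ _ _ i h; exact hL X i (by simpa using h)
  | cons r rs ih =>
    intro X _ _ hw i h
    rw [isWeaklyRegular_cons_iff] at hw
    have := ih (fun r hr => hk r (List.mem_cons_of_mem _ hr)) (QuotSMulTop r X) hw.2 (i+1)
      (by simp only [List.length_cons] at h; omega)
    have hi := reg_VI hw.1 i this
    obtain ⟨k, hk⟩ := hk r List.mem_cons_self
    have h0 : ∀ t : T R i X Y, t = 0 := by
      have : ∀ k, ∀ t : T R i X Y, r ^ k • t = 0 → t = 0 := by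
        intro k
        induction k with
        | zero => intro t ht; simpa using ht
        | succ k ih =>
          intro t ht
          rw [pow_succ, mul_smul] at ht
          exact hi t (ih _ ht)
      exact fun t => this k t (T_killed' i _ hk t)
    exact ⟨fun a b => (h0 a).trans (h0 b).symm⟩

lemma nak [IsLocalRing R] {T : Type} [AddCommGroup T] [Module R T] [Module.Finite R T] {r : R}
    (hr : r ∈ maximalIdeal R) (h : ∀ t : T, ∃ s, r • s = t) : Subsingleton T := by
  have : (⊤ : Submodule R T) = ⊥ := by
    apply Submodule.eq_bot_of_le_smul_of_le_jacobson_bot (maximalIdeal R) _ Module.Finite.fg_top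
    · intro t _
      obtain ⟨s, rfl⟩ := h t
      exact Submodule.smul_mem_smul hr trivial
    · exact IsLocalRing.maximalIdeal_le_jacobson _
  exact (Submodule.subsingleton_iff R).1 (subsingleton_of_bot_eq_top this.symm)

lemma F4 [IsLocalRing R] [IsNoetherianRing R] [Module.Finite R Y] (rs : List R)
    (hm : ∀ r ∈ rs, r ∈ maximalIdeal R) :
    ∀ (X : Type) [AddCommGroup X] [Module R X] [Module.Finite R X] (_ : IsWeaklyRegular X rs)
      (_ : ∀ i, V R i (Q rs X) Y), (∀ i, V R i X Y) ∧ IsWeaklyRegular (X ⊗[R] Y) rs := by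
  induction rs with
  | nil =>
    intro X _ _ _ _ h
    refine ⟨fun i => (V_congr _ ?_).1 (h i), by simp⟩
    exact (Submodule.quotEquivOfEqBot _ (by simp))
  | cons r rs ih =>
    intro X _ _ _ hw h
    rw [isWeaklyRegular_cons_iff] at hw
    obtain ⟨h1, h2⟩ := ih (fun r hr => hm r (List.mem_cons_of_mem _ hr)) (QuotSMulTop r X) hw.2
      (fun i => (V_congr i (Submodule.quotOfListConsSMulTopEquivQuotSMulTopInner X r rs)).1 (h i))
    refine ⟨fun i => ?_, ?_⟩
    · have := T_finite (R := R) i X Y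
      exact nak (hm r List.mem_cons_self) (reg_VS hw.1 i (h1 i))
    · rw [isWeaklyRegular_cons_iff]
      constructor
      · obtain ⟨δ, e1, e2⟩ := exists_delta0 (Y := Y) _ _ (reg_inj hw.1)
          (Submodule.mkQ_surjective _) (reg_exact r)
        have h10 := h1 0
        unfold V at h10
        have h10' : Subsingleton (T0 R (QuotSMulTop r X) Y) := h10
        rw [isSMulRegular_iff_right_eq_zero_of_smul]
        intro t ht
        have := (e2 t).1 (by
          rw [LinearMap.rTensor_smul, LinearMap.rTensor_id]; simpa using ht)
        obtain ⟨s, rfl⟩ := this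
        rw [Subsingleton.elim s 0, map_zero]
      · exact ((QuotSMulTop.quotSMulTopTensorEquivQuotSMulTop r Y X).isWeaklyRegular_congr rs).1 h2

lemma F4R [IsLocalRing R] [IsNoetherianRing R] [Module.Finite R Y] (rs : List R)
    (hm : ∀ r ∈ rs, r ∈ maximalIdeal R) (hw : IsWeaklyRegular R rs)
    (h : ∀ i, V R i (Q rs R) Y) : IsWeaklyRegular Y rs :=
  ((TensorProduct.lid R Y).isWeaklyRegular_congr rs).1 (F4 rs hm R hw h).2

end F
end MT


namespace MT
open TensorProduct Function RingTheory.Sequence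
open scoped Pointwise

section G
set_option linter.unusedSectionVars false
set_option linter.style.haveILetI false
variable {R : Type} [CommRing R] [IsNoetherianRing R]

lemma exists_syz (n : ℕ) : ∀ (M : Type) [AddCommGroup M] [Module R M] [Module.Finite R M],
    ∃ (Ω : Type) (_ : AddCommGroup Ω) (_ : Module R Ω) (_ : Module.Finite R Ω),
      ∀ (i : ℕ) (Y : Type) [AddCommGroup Y] [Module R Y], V R i Ω Y ↔ V R (i+n) M Y := by
  induction n with
  | zero => intro M _ _ _; exact ⟨M, inferInstance, inferInstance, inferInstance, fun _ _ _ _ => Iff.rfl⟩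
  | succ n ih =>
    intro M _ _ _
    obtain ⟨k, g, hg⟩ := Module.Finite.exists_fin' R M
    have : Module.Finite R (LinearMap.ker g) := Module.IsNoetherian.finite _ _
    obtain ⟨Ω, i1, i2, i3, h⟩ := ih (LinearMap.ker g)
    refine ⟨Ω, i1, i2, i3, fun i Y _ _ => ?_⟩
    rw [h, ← add_assoc, ← V_shift (i+n) (LinearMap.ker g).subtype g (Submodule.injective_subtype _)
      hg (LinearMap.exact_subtype_ker_map _)]

variable [IsLocalRing R]

lemma min_cover (Ω : Type) [AddCommGroup Ω] [Module R Ω] [Module.Finite R Ω] :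
    ∃ (k : ℕ) (g : (Fin k → R) →ₗ[R] Ω), Surjective g ∧
      ∀ w, g w = 0 → ∀ i, w i ∈ maximalIdeal R := by
  let K := ResidueField R
  have : Module.Finite K (K ⊗[R] Ω) := inferInstance
  let b := Module.finBasis K (K ⊗[R] Ω)
  have hs : ∀ z : K ⊗[R] Ω, ∃ v : Ω, (1 : K) ⊗ₜ[R] v = z :=
    TensorProduct.mk_surjective R Ω K (residue_surjective)
  choose v hv using fun i => hs (b i)
  have hspan := IsLocalRing.span_eq_top_of_tmul_eq_basis v b hv
  refine ⟨_, Fintype.linearCombination R v, ?_, ?_⟩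
  · rw [← LinearMap.range_eq_top, Fintype.range_linearCombination, hspan]
  · intro w hw i
    rw [Fintype.linearCombination_apply] at hw
    have : ∑ i, residue R (w i) • b i = 0 := by
      have h2 := congrArg (fun x : Ω => (1 : K) ⊗ₜ[R] x) hw
      simp only [tmul_sum, tmul_zero, tmul_smul] at h2
      rw [← h2]
      refine Finset.sum_congr rfl fun j _ => ?_
      rw [hv]
      exact algebraMap_smul K (w j) (b j)
    have h3 := Fintype.linearIndependent_iff.1 b.linearIndependent _ this i
    exact (residue_eq_zero_iff _).1 h3

omit [IsNoetherianRing R] in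
lemma V_res_of {Z N : Type} [AddCommGroup Z] [Module R Z] [AddCommGroup N] [Module R N]
    (hZ : ∀ r ∈ maximalIdeal R, ∀ z : Z, r • z = 0) [Nontrivial Z] (n : ℕ) (h : V R n Z N) :
    V R n (R ⧸ maximalIdeal R) N := by
  have ht : Module.IsTorsionBySet R Z (maximalIdeal R : Set R) := fun z r => hZ r r.2 z
  letI : Module (R ⧸ maximalIdeal R) Z := ht.module
  letI : Field (R ⧸ maximalIdeal R) := Ideal.Quotient.field _
  haveI : IsScalarTower R (R ⧸ maximalIdeal R) Z := ht.isScalarTower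
  obtain ⟨z, hz⟩ := exists_ne (0 : Z)
  let f := LinearMap.toSpanSingleton (R ⧸ maximalIdeal R) Z z
  have hf : LinearMap.ker f = ⊥ := by
    rw [LinearMap.ker_eq_bot']
    intro m hm
    simp only [f, LinearMap.toSpanSingleton_apply] at hm
    exact (smul_eq_zero.1 hm).resolve_right hz
  obtain ⟨g, hg⟩ := LinearMap.exists_leftInverse_of_injective f hf
  exact V_retract n (f.restrictScalars R) (g.restrictScalars R)
    (by ext x; exact LinearMap.congr_fun hg _) h

lemma kill_Q {k : ℕ} {Ω : Type} [AddCommGroup Ω] [Module R Ω] (g : (Fin k → R) →ₗ[R] Ω)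
    (hg : Surjective g) (hmin : ∀ w, g w = 0 → ∀ i, w i ∈ maximalIdeal R)
    (xs : List R) (hx : maximalIdeal R ^ 2 ≤ Ideal.ofList xs) (h0 : V R 0 (Q xs R) Ω)
    (r : R) (hr : r ∈ maximalIdeal R) (z : Q xs (LinearMap.ker g)) : r • z = 0 := by
  obtain ⟨w, rfl⟩ := Submodule.mkQ_surjective _ z
  have h1 : V R 0 (R ⧸ Ideal.ofList xs) Ω :=
    (V_congr 0 (Submodule.quotEquivOfEq _ _ (by simp))).1 h0
  rw [V_shift0' (LinearMap.ker g).subtype g (Submodule.injective_subtype _)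
      hg (LinearMap.exact_subtype_ker_map _)] at h1
  have h2 : (1 : R ⧸ Ideal.ofList xs) ⊗ₜ[R] (r • w) = 0 := by
    apply h1
    rw [LinearMap.lTensor_tmul, map_zero]
    have : (LinearMap.ker g).subtype (r • w) = ∑ i, (r * w.1 i) • (Pi.single i 1 : Fin k → R) := by
      ext j
      simp [Finset.sum_apply, Pi.single_apply]
    rw [this, tmul_sum]
    refine Finset.sum_eq_zero fun i _ => ?_
    rw [← smul_tmul]
    have : (r * w.1 i) • (1 : R ⧸ Ideal.ofList xs) = 0 := by
      rw [← Algebra.algebraMap_eq_smul_one]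
      apply Ideal.Quotient.eq_zero_iff_mem.2
      apply hx
      rw [pow_two]
      exact Ideal.mul_mem_mul hr (hmin _ w.2 i)
    rw [this, zero_tmul]
  have h3 := congrArg (TensorProduct.quotTensorEquivQuotSMul (LinearMap.ker g) (Ideal.ofList xs)) h2
  rw [map_zero] at h3
  rw [← map_smul, ← h3]
  have := TensorProduct.quotTensorEquivQuotSMul_mk_tmul (Ideal.ofList xs) 1 (r • w)
  rw [map_one, one_smul] at this
  exact this.symm

omit [IsNoetherianRing R] in
lemma Q_triv (xs : List R) (hm : ∀ r ∈ xs, r ∈ maximalIdeal R) (Z : Type) [AddCommGroup Z]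
    [Module R Z] [Module.Finite R Z] (hs : Subsingleton (Q xs Z)) : Subsingleton Z := by
  have hbot : (⊤ : Submodule R Z) = ⊥ := by
    apply Submodule.eq_bot_of_le_smul_of_le_jacobson_bot (maximalIdeal R) _ Module.Finite.fg_top
    · have h1 := (Submodule.Quotient.subsingleton_iff).1 hs
      calc ⊤ = _ := h1.symm
        _ ≤ _ := Submodule.smul_mono_left (Ideal.span_le.2 hm)
    · exact IsLocalRing.maximalIdeal_le_jacobson _
  exact (Submodule.subsingleton_iff R).1 (subsingleton_of_bot_eq_top hbot.symm)

theorem dich {Ω N : Type} [AddCommGroup Ω] [Module R Ω] [Module.Finite R Ω] [AddCommGroup N]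
    [Module R N] (xs : List R) (hm : ∀ r ∈ xs, r ∈ maximalIdeal R) (hw : IsWeaklyRegular R xs)
    (hx : maximalIdeal R ^ 2 ≤ Ideal.ofList xs) (hV : ∀ i, V R i (Q xs R) Ω) (j : ℕ)
    (h : ∀ i, j + 1 ≤ i → i ≤ j + 1 + xs.length → V R i Ω N) :
    (∀ (i : ℕ) (Y : Type) [AddCommGroup Y] [Module R Y], V R i Ω Y) ∨
      V R (j + xs.length) (R ⧸ maximalIdeal R) N := by
  obtain ⟨k, g, hg, hmin⟩ := min_cover (R := R) Ω
  have hfin : Module.Finite R (LinearMap.ker g) := Module.IsNoetherian.finite _ _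
  have hsh := fun (i : ℕ) (Y : Type) [AddCommGroup Y] [Module R Y] =>
    V_shift (Y := Y) i (LinearMap.ker g).subtype g (Submodule.injective_subtype _)
      hg (LinearMap.exact_subtype_ker_map _)
  have hw1 : IsWeaklyRegular (LinearMap.ker g) xs :=
    F4R xs hm hw (fun i => (V_symm i).1 ((hsh i _).1 ((V_symm _).1 (hV (i+1)))))
  have hQ : V R (j + xs.length) (Q xs (LinearMap.ker g)) N :=
    V_Q xs _ hw1 j (fun i h1 h2 => (hsh i N).1 (h _ (by omega) (by omega)))
  rcases subsingleton_or_nontrivial (Q xs (LinearMap.ker g)) with hs | hn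
  · left
    have hz : Subsingleton (LinearMap.ker g) := Q_triv xs hm _ hs
    have hi : Injective g := by
      rw [injective_iff_map_eq_zero]
      intro w hw
      exact congrArg Subtype.val (Subsingleton.elim (⟨w, hw⟩ : LinearMap.ker g) 0)
    intro i Y _ _
    exact (V_congr i (LinearEquiv.ofBijective g ⟨hi, hg⟩)).1 (V_flat i)
  · right
    exact V_res_of (kill_Q g hg hmin xs hx (hV 0)) _ hQ

end G
end MT


namespace MT
open TensorProduct Function RingTheory.Sequence
open scoped Pointwise

section H
set_option linter.unusedSectionVars false
variable {R : Type} [CommRing R]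

def QZ (q : Ideal R) (T : Type) [AddCommGroup T] [Module R T] : Prop :=
  ∀ t : T, ∃ s, s ∉ q ∧ s • t = 0

variable {q : Ideal R} [hq : q.IsPrime]

lemma QZ_mid {A B C : Type} [AddCommGroup A] [Module R A] [AddCommGroup B] [Module R B]
    [AddCommGroup C] [Module R C] (f : A →ₗ[R] B) (g : B →ₗ[R] C) (h : Exact f g)
    (h1 : QZ q A) (h2 : QZ q C) : QZ q B := by
  intro b
  obtain ⟨s, hs, hb⟩ := h2 (g b)
  rw [← map_smul] at hb
  obtain ⟨a, ha⟩ := (h _).1 hb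
  obtain ⟨u, hu, hua⟩ := h1 a
  refine ⟨u * s, fun h => (hq.mem_or_mem h).elim hu hs, ?_⟩
  rw [mul_smul, ← ha, ← map_smul, hua, map_zero]

lemma QZ_of_sub {A : Type} [AddCommGroup A] [Module R A] (h : Subsingleton A) : QZ q A :=
  fun _ => ⟨1, fun h => hq.ne_top ((Ideal.eq_top_iff_one _).2 h), Subsingleton.elim _ _⟩

lemma QZ_congr {A B : Type} [AddCommGroup A] [Module R A] [AddCommGroup B] [Module R B]
    (e : A ≃ₗ[R] B) (h : QZ q A) : QZ q B := by
  intro b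
  obtain ⟨s, hs, h1⟩ := h (e.symm b)
  refine ⟨s, hs, e.symm.injective ?_⟩
  rw [map_smul, h1, map_zero]

lemma QZ_nak {A : Type} [AddCommGroup A] [Module R A] [Module.Finite R A] {s : R} (hs : s ∈ q)
    (h : ∀ t : A, ∃ u, u ∉ q ∧ ∃ t', s • t' = u • t) : QZ q A := by
  obtain ⟨S, hS⟩ := (Module.Finite.fg_top : (⊤ : Submodule R A).FG)
  classical
  choose u hu hut using h
  let U := ∏ t ∈ S, u t
  have hU : U ∉ q := by
    intro hh
    obtain ⟨t, _, ht⟩ := (Ideal.IsPrime.prod_mem_iff).1 hh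
    exact hu t ht
  have hr : LinearMap.range (algebraMap R (Module.End R A) U) ≤ q • ⊤ := by
    rw [LinearMap.range_eq_map, ← hS, Submodule.map_span, Submodule.span_le]
    rintro _ ⟨t, ht, rfl⟩
    obtain ⟨t', ht'⟩ := hut t
    have : U • t = s • ((∏ t ∈ S.erase t, u t) • t') := by
      rw [smul_comm, ht', ← mul_smul]
      congr 1
      exact (Finset.prod_erase_mul S u ht).symm
    rw [Module.algebraMap_end_apply, this, hS]
    exact Submodule.smul_mem_smul hs trivial
  obtain ⟨p, hp, -, hc, h0⟩ :=
    LinearMap.exists_monic_and_natDegree_eq_and_coeff_mem_pow_and_aeval_eq_zero R _ q hr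
  intro t
  refine ⟨p.eval U, ?_, ?_⟩
  · intro hh
    rw [Polynomial.eval_eq_sum_range, Finset.sum_range_succ] at hh
    have h3 : ∑ i ∈ Finset.range p.natDegree, p.coeff i * U ^ i ∈ q := by
      refine Ideal.sum_mem _ fun i hi => Ideal.mul_mem_right _ _ ?_
      refine Ideal.pow_le_self ?_ (hc i)
      have := Finset.mem_range.1 hi
      omega
    have h4 := (Ideal.add_mem_iff_right _ h3).1 hh
    rw [hp.coeff_natDegree, one_mul] at h4
    exact hU (hq.mem_of_pow_mem _ h4)
  · have h5 := LinearMap.congr_fun h0 t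
    rw [Polynomial.aeval_algebraMap_apply] at h5
    simpa [Polynomial.aeval_def] using h5

variable [IsNoetherianRing R] {N : Type} [AddCommGroup N] [Module R N] [Module.Finite R N]

lemma C1_ideal (n : ℕ) (h : QZ q (T R n (R ⧸ q) N)) (I : Ideal R) : QZ q (T R n (R ⧸ I) N) := by
  induction I using WellFoundedGT.induction with
  | ind I ih =>
  by_cases hI : I ≤ q
  swap
  · obtain ⟨s, hs, hsq⟩ := SetLike.not_le_iff_exists.1 hI
    refine fun t => ⟨s, hsq, T_killed n s (fun x => ?_) t⟩
    obtain ⟨x, rfl⟩ := Ideal.Quotient.mk_surjective x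
    rw [← Ideal.Quotient.mk_eq_mk, ← Submodule.Quotient.mk_smul, Submodule.Quotient.mk_eq_zero]
    exact I.mul_mem_right x hs
  rcases hI.eq_or_lt with rfl | hlt
  · exact h
  obtain ⟨s, hs, hsI⟩ := SetLike.exists_of_lt hlt
  let J : Ideal R := Submodule.comap (LinearMap.mulLeft R s) I
  have hJm : ∀ x, x ∈ J ↔ s * x ∈ I := fun x => Iff.rfl
  have hIJ : I ≤ J := fun x hx => I.mul_mem_left _ hx
  let K : Ideal R := I ⊔ Ideal.span {s}
  have hIK : I < K := lt_of_le_of_ne le_sup_left (fun h => hsI (by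
    rw [h]; exact Ideal.mem_sup_right (Ideal.mem_span_singleton_self s)))
  let g : (R ⧸ I) →ₗ[R] (R ⧸ K) := Submodule.factor hIK.le
  have hg : Surjective g := Submodule.factor_surjective _
  have hgk : ∀ x : R, g (Submodule.Quotient.mk x) = 0 ↔ ∃ y, s * y - x ∈ I := by
    intro x
    have : g (Submodule.Quotient.mk x) = (Submodule.Quotient.mk x : R ⧸ K) := rfl
    rw [this, Submodule.Quotient.mk_eq_zero, Submodule.mem_sup]
    constructor
    · rintro ⟨y, hy, z, hz, rfl⟩
      obtain ⟨w, rfl⟩ := Ideal.mem_span_singleton'.1 hz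
      refine ⟨w, ?_⟩
      have : s * w - (y + w * s) = - y := by ring
      rw [this]; exact I.neg_mem hy
    · rintro ⟨y, hy⟩
      exact ⟨-(s * y - x), I.neg_mem hy, s * y,
        Ideal.mem_span_singleton'.2 ⟨y, mul_comm _ _⟩, by ring⟩
  rcases hIJ.eq_or_lt with hJ | hJ
  · have hreg : IsSMulRegular (R ⧸ I) s := by
      rw [isSMulRegular_iff_right_eq_zero_of_smul]
      intro x hx
      obtain ⟨x, rfl⟩ := Submodule.Quotient.mk_surjective _ x
      rw [← Submodule.Quotient.mk_smul, Submodule.Quotient.mk_eq_zero] at hx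
      rw [Submodule.Quotient.mk_eq_zero, hJ, hJm]
      exact hx
    have hex : Exact (s • (LinearMap.id : (R ⧸ I) →ₗ[R] (R ⧸ I))) g := by
      intro x
      obtain ⟨x, rfl⟩ := Submodule.Quotient.mk_surjective _ x
      rw [hgk]
      constructor
      · rintro ⟨y, hy⟩
        refine ⟨Submodule.Quotient.mk y, ?_⟩
        exact (Submodule.Quotient.eq _).2 hy
      · rintro ⟨y, hy⟩
        obtain ⟨y, rfl⟩ := Submodule.Quotient.mk_surjective _ y
        exact ⟨y, (Submodule.Quotient.eq _).1 hy⟩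
    have hmid := exact_mid (Y := N) n _ g (reg_inj hreg) hg hex
    have := T_finite (R := R) n (R ⧸ I) N
    refine QZ_nak hs fun t => ?_
    obtain ⟨u, hu, hut⟩ := ih K hIK (mapT n N g t)
    rw [← map_smul] at hut
    obtain ⟨t', ht'⟩ := (hmid _).1 hut
    exact ⟨u, hu, t', by rw [← ht', map0_smul]⟩
  · let f : (R ⧸ J) →ₗ[R] (R ⧸ I) := Submodule.mapQ J I (LinearMap.mulLeft R s) le_rfl
    have hfm : ∀ x : R, f (Submodule.Quotient.mk x) = Submodule.Quotient.mk (s * x) := fun x => rfl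
    have hf : Injective f := by
      rw [injective_iff_map_eq_zero]
      intro x hx
      obtain ⟨x, rfl⟩ := Submodule.Quotient.mk_surjective _ x
      rw [hfm, Submodule.Quotient.mk_eq_zero] at hx
      exact (Submodule.Quotient.mk_eq_zero _).2 hx
    have hex : Exact f g := by
      intro x
      obtain ⟨x, rfl⟩ := Submodule.Quotient.mk_surjective _ x
      rw [hgk]
      constructor
      · rintro ⟨y, hy⟩
        refine ⟨Submodule.Quotient.mk y, ?_⟩
        exact (Submodule.Quotient.eq _).2 hy
      · rintro ⟨y, hy⟩
        obtain ⟨y, rfl⟩ := Submodule.Quotient.mk_surjective _ y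
        exact ⟨y, (Submodule.Quotient.eq _).1 hy⟩
    exact QZ_mid _ _ (exact_mid (Y := N) n f g hf hg hex) (ih J hJ) (ih K hIK)

lemma C1 (n : ℕ) (h : QZ q (T R n (R ⧸ q) N)) (X : Type) [AddCommGroup X] [Module R X]
    [hX : Module.Finite R X] : QZ q (T R n X N) := by
  induction hX using IsNoetherianRing.induction_on_isQuotientEquivQuotientPrime R with
  | subsingleton X =>
    refine fun t => ⟨1, fun h => hq.ne_top ((Ideal.eq_top_iff_one _).2 h), ?_⟩
    exact T_killed n 1 (fun x => Subsingleton.elim _ _) t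
  | quotient X p e => exact QZ_congr (congrX n N e.symm) (C1_ideal n h p.1)
  | exact X1 X2 X3 f g hf hg hfg h1 h3 =>
    exact QZ_mid _ _ (exact_mid (Y := N) n f g hf hg hfg) h1 h3

lemma V_of_QZ [IsLocalRing R] {n : ℕ} {X : Type} [AddCommGroup X] [Module R X]
    (h : QZ (maximalIdeal R) (T R n X N)) : V R n X N := by
  have : ∀ t : T R n X N, t = 0 := by
    intro t
    obtain ⟨s, hs, h1⟩ := h t
    rw [IsLocalRing.mem_maximalIdeal, mem_nonunits_iff, not_not] at hs
    exact (hs.smul_eq_zero).1 h1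
  exact ⟨fun a b => (this a).trans (this b).symm⟩

/-- Vanishing against the residue field gives vanishing everywhere. -/
lemma V_all [IsLocalRing R] (n : ℕ) (h : V R n (R ⧸ maximalIdeal R) N) (k : ℕ) (hk : n ≤ k)
    (X : Type) [AddCommGroup X] [Module R X] [Module.Finite R X] : V R k X N := by
  obtain ⟨j, rfl⟩ : ∃ j, k = n + j := ⟨k - n, by omega⟩
  obtain ⟨Ω, _, _, _, hΩ⟩ := exists_syz (R := R) j X
  rw [← hΩ]
  exact V_of_QZ (C1 n (QZ_of_sub h) Ω)

lemma C2 (ys : List R) (hy : IsWeaklyRegular R ys) (f : (R ⧸ q) →ₗ[R] Q ys R) (hf : Injective f)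
    (n1 : ℕ) (hN : ∀ (X : Type) [AddCommGroup X] [Module R X] [Module.Finite R X],
      ∀ n, n1 ≤ n → V R n X N) (k : ℕ) : ∀ n, ys.length ≤ n → n1 ≤ n + k →
      ∀ (X : Type) [AddCommGroup X] [Module R X] [Module.Finite R X], QZ q (T R n X N) := by
  induction k with
  | zero => intro n _ hn X _ _ _; exact QZ_of_sub (hN X n hn)
  | succ k ih =>
    intro n hl hn X _ _ _
    refine C1 n ?_ X
    obtain ⟨δ, e1, e2⟩ := exists_delta (Y := N) n f (LinearMap.range f).mkQ hf
      (Submodule.mkQ_surjective _) (LinearMap.exact_map_mkQ_range f)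
    exact QZ_mid δ _ e2 (ih (n+1) (by omega) (by omega) _) (QZ_of_sub (V_QR ys hy n hl))

lemma DD (ys : List R) : ∀ (X : Type) [AddCommGroup X] [Module R X] (_ : IsWeaklyRegular X ys)
    (s : ℕ) (t : T R s X N) (_ : ∀ i, s < i → V R i X N) (_ : ∀ r ∈ ys, r • t = 0)
    (_ : QZ q (T R (s + ys.length) (Q ys X) N)), ∃ u, u ∉ q ∧ u • t = 0 := by
  induction ys with
  | nil =>
    intro X _ _ _ s t _ _ h
    exact QZ_congr (congrX s N (Submodule.quotEquivOfEqBot _ (by simp))) h t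
  | cons r rs ih =>
    intro X _ _ hw s t hV hk h
    rw [isWeaklyRegular_cons_iff] at hw
    obtain ⟨δ, hδ, hs⟩ := reg_ker hw.1 s (hV (s+1) (by omega))
    obtain ⟨t', rfl⟩ := hs t (hk r List.mem_cons_self)
    obtain ⟨u, hu, hut⟩ := ih (QuotSMulTop r X) hw.2 (s+1) t' (fun i hi => by
        obtain ⟨i, rfl⟩ : ∃ j, i = j+1 := ⟨i-1, by omega⟩
        exact reg_V hw.1 i (hV _ (by omega)) (hV _ (by omega)))
      (fun r' hr' => hδ (by
        rw [map_smul, map_zero]; exact hk r' (List.mem_cons_of_mem _ hr')))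
      (by
        have h2 := QZ_congr (congrX _ N
          (Submodule.quotOfListConsSMulTopEquivQuotSMulTopInner X r rs)) h
        have e : s + (r :: rs).length = s + 1 + rs.length := by
          simp only [List.length_cons]; omega
        rwa [e] at h2)
    exact ⟨u, hu, by rw [← map_smul, hut, map_zero]⟩

end H
end MT


namespace MT
open TensorProduct Function RingTheory.Sequence
open scoped Pointwise

section I
set_option linter.unusedSectionVars false
variable {R : Type} [CommRing R] [IsNoetherianRing R] [IsLocalRing R]

lemma dim_quot (d : ℕ) (hdim : ringKrullDim R = (d : WithBot ℕ∞)) (ys : List R)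
    (hm : ∀ r ∈ ys, r ∈ maximalIdeal R) (hw : IsWeaklyRegular R ys) :
    ∃ e : ℕ, ringKrullDim (R ⧸ Ideal.ofList ys) = (e : WithBot ℕ∞) ∧ e + ys.length = d := by
  have hr : IsRegular R ys := (isRegular_iff_isWeaklyRegular_of_subset_maximalIdeal hm).2 hw
  have h := ringKrullDim_add_length_eq_ringKrullDim_of_isRegular ys hr
  rw [hdim] at h
  generalize ringKrullDim (R ⧸ Ideal.ofList ys) = a at h
  induction a with
  | bot => rw [WithBot.bot_add] at h; exact absurd h (by simp)
  | coe a =>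
    induction a with
    | top =>
      exact absurd (WithBot.coe_injective (h : ((⊤ + (ys.length : ℕ∞) : ℕ∞) : WithBot ℕ∞) = ((d : ℕ∞) : WithBot ℕ∞)))
        (by simp)
    | coe a => exact ⟨a, rfl, by exact_mod_cast h⟩

lemma nilp (ys : List R) (h0 : ringKrullDim (R ⧸ Ideal.ofList ys) ≤ 0) (x : R)
    (hx : x ∈ maximalIdeal R) : ∃ k : ℕ, ∀ y : Q ys R, x ^ k • y = 0 := by
  have : Ring.KrullDimLE 0 (R ⧸ Ideal.ofList ys) := Ring.krullDimLE_iff.2 (by simpa using h0)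
  have hn : IsNilpotent (Ideal.Quotient.mk (Ideal.ofList ys) x) := by
    rw [nilpotent_iff_mem_prime]
    intro P hP
    have hPm : P.IsMaximal := hP.isMaximal'
    have := Ideal.comap_isMaximal_of_surjective (Ideal.Quotient.mk (Ideal.ofList ys))
      Ideal.Quotient.mk_surjective (K := P)
    have h2 := IsLocalRing.eq_maximalIdeal this
    rw [← h2] at hx
    exact hx
  obtain ⟨k, hk⟩ := hn
  rw [← map_pow, Ideal.Quotient.eq_zero_iff_mem] at hk
  refine ⟨k, fun y => ?_⟩
  obtain ⟨y, rfl⟩ := Submodule.Quotient.mk_surjective _ y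
  rw [← Submodule.Quotient.mk_smul, Submodule.Quotient.mk_eq_zero]
  exact Submodule.smul_mem_smul hk trivial

lemma ass_emb {Z : Type} [AddCommGroup Z] [Module R Z] {q : Ideal R}
    (h : q ∈ associatedPrimes R Z) :
    q.IsPrime ∧ ∃ z : Z, (∀ r, r ∈ q ↔ r • z = 0) ∧ ∃ f : (R ⧸ q) →ₗ[R] Z, Injective f := by
  obtain ⟨h1, z, hz⟩ := isAssociatedPrime_iff.1 h
  have hm : ∀ r, r ∈ q ↔ r • z = 0 := fun r => by
    rw [hz, Submodule.mem_colon_singleton, Submodule.mem_bot]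
  refine ⟨h1, z, hm, Submodule.liftQ q (LinearMap.toSpanSingleton R Z z) (fun r hr => ?_), ?_⟩
  · exact (hm r).1 hr
  · rw [injective_iff_map_eq_zero]
    intro x hx
    obtain ⟨x, rfl⟩ := Submodule.Quotient.mk_surjective _ x
    rw [Submodule.Quotient.mk_eq_zero, hm]
    exact hx

lemma ex_ass {Z : Type} [AddCommGroup Z] [Module R Z] [Module.Finite R Z] (p : Ideal R)
    (h : ∀ r ∈ p, ¬ IsSMulRegular Z r) : ∃ q ∈ associatedPrimes R Z, p ≤ q := by
  have hfin := associatedPrimes.finite R Z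
  have h1 : (p : Set R) ⊆ ⋃ i ∈ (hfin.toFinset : Set (Ideal R)), (i : Set R) := by
    rw [hfin.coe_toFinset, biUnion_associatedPrimes_eq_compl_regular]
    exact h
  obtain ⟨q, hq, hpq⟩ := (Ideal.subset_union_prime (f := fun i : Ideal R => i) ⊤ ⊤
    (fun i hi _ _ => (IsAssociatedPrime.isPrime (hfin.mem_toFinset.1 hi)))).1 h1
  exact ⟨q, hfin.mem_toFinset.1 hq, hpq⟩

lemma maxreg (d : ℕ) (hdim : ringKrullDim R = (d : WithBot ℕ∞)) (p : Ideal R)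
    (hp : p ≤ maximalIdeal R) (k : ℕ) : ∀ (ys : List R) (_ : d ≤ ys.length + k)
    (_ : ∀ r ∈ ys, r ∈ p) (_ : IsWeaklyRegular R ys),
    ∃ ws : List R, (∃ zs, ws = ys ++ zs) ∧ (∀ r ∈ ws, r ∈ p) ∧ IsWeaklyRegular R ws ∧
      ∃ q ∈ associatedPrimes R (Q ws R), p ≤ q := by
  induction k with
  | zero =>
    intro ys hd hm hw
    refine ⟨ys, ⟨[], by simp⟩, hm, hw, ?_⟩
    apply ex_ass
    intro r hr hreg
    have hw2 : IsWeaklyRegular R (ys ++ [r]) := by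
      rw [isWeaklyRegular_append_iff, isWeaklyRegular_singleton_iff]
      exact ⟨hw, hreg⟩
    obtain ⟨e, _, he⟩ := dim_quot d hdim (ys ++ [r]) (by
      intro s hs
      rcases List.mem_append.1 hs with h | h
      · exact hp (hm s h)
      · rw [List.mem_singleton.1 h]; exact hp hr) hw2
    simp only [List.length_append, List.length_singleton] at he
    omega
  | succ k ih =>
    intro ys hd hm hw
    by_cases h : ∀ r ∈ p, ¬ IsSMulRegular (Q ys R) r
    · refine ⟨ys, ⟨[], by simp⟩, hm, hw, ?_⟩
      exact ex_ass p h
    · push Not at h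
      obtain ⟨r, hr, hreg⟩ := h
      have hw2 : IsWeaklyRegular R (ys ++ [r]) := by
        rw [isWeaklyRegular_append_iff, isWeaklyRegular_singleton_iff]
        exact ⟨hw, hreg⟩
      obtain ⟨ws, ⟨zs, hz⟩, h1, h2, h3⟩ := ih (ys ++ [r]) (by simp; omega) (by
        intro s hs
        rcases List.mem_append.1 hs with h | h
        · exact hm s h
        · rw [List.mem_singleton.1 h]; exact hr) hw2
      exact ⟨ws, ⟨r :: zs, by simp [hz]⟩, h1, h2, h3⟩

lemma down {L : Type} [AddCommGroup L] [Module R L] (rs : List R)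
    (hk : ∀ r ∈ rs, ∀ y : L, r • y = 0) : ∀ (X : Type) [AddCommGroup X] [Module R X]
    (_ : IsWeaklyRegular X rs) (n : ℕ) (_ : V R (n + rs.length) (Q rs X) L), V R n X L := by
  induction rs with
  | nil =>
    intro X _ _ _ n h
    exact (V_congr n (Submodule.quotEquivOfEqBot _ (by simp))).1 h
  | cons r rs ih =>
    intro X _ _ hw n h
    rw [isWeaklyRegular_cons_iff] at hw
    rw [V_congr _ (Submodule.quotOfListConsSMulTopEquivQuotSMulTopInner X r rs)] at h
    have e : n + (r :: rs).length = n + 1 + rs.length := by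
      simp only [List.length_cons]; omega
    rw [e] at h
    have h2 := ih (fun r hr => hk r (List.mem_cons_of_mem _ hr)) (QuotSMulTop r X) hw.2 (n+1) h
    have h0 : ∀ t : T R n X L, t = 0 := fun t =>
      reg_VI hw.1 n h2 t (T_killed' n r (hk r List.mem_cons_self) t)
    exact ⟨fun a b => (h0 a).trans (h0 b).symm⟩

lemma res_nonvan (xs : List R) (hm : ∀ r ∈ xs, r ∈ maximalIdeal R) (hw : IsWeaklyRegular R xs)
    (n : ℕ) (hn : n + 1 = xs.length) (h : V R n (Q xs R) (R ⧸ maximalIdeal R)) : False := by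
  cases xs with
  | nil => simp at hn
  | cons r rs =>
    have hkill : ∀ s ∈ maximalIdeal R, ∀ y : R ⧸ maximalIdeal R, s • y = 0 := by
      intro s hs y
      obtain ⟨y, rfl⟩ := Submodule.Quotient.mk_surjective _ y
      rw [← Submodule.Quotient.mk_smul, Submodule.Quotient.mk_eq_zero]
      exact Ideal.mul_mem_right _ _ hs
    rw [isWeaklyRegular_cons_iff] at hw
    rw [V_congr _ (Submodule.quotOfListConsSMulTopEquivQuotSMulTopInner R r rs)] at h
    have e : n = 0 + rs.length := by
      simp only [List.length_cons] at hn; omega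
    rw [e] at h
    have h0 := down rs (fun s hs => hkill s (hm s (List.mem_cons_of_mem _ hs))) _ hw.2 0 h
    obtain ⟨δ, e1, e2⟩ := exists_delta0 (Y := R ⧸ maximalIdeal R) _ _ (reg_inj hw.1)
          (Submodule.mkQ_surjective _) (reg_exact r)
    have h10' : Subsingleton (T0 R (QuotSMulTop r R) (R ⧸ maximalIdeal R)) := h0
    have h3 : (1 : R) ⊗ₜ[R] (1 : R ⧸ maximalIdeal R) = 0 := by
      have := (e2 ((1 : R) ⊗ₜ[R] (1 : R ⧸ maximalIdeal R))).1 (by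
        rw [LinearMap.rTensor_smul, LinearMap.rTensor_id, LinearMap.smul_apply,
          LinearMap.id_apply, ← tmul_smul, hkill r (hm r List.mem_cons_self), tmul_zero])
      obtain ⟨s, hs⟩ := this
      rw [← hs, Subsingleton.elim s 0, map_zero]
    have h4 := congrArg (TensorProduct.lid R _) h3
    rw [lid_tmul, one_smul, map_zero] at h4
    exact one_ne_zero h4

theorem claimA (d : ℕ) (hdim : ringKrullDim R = (d : WithBot ℕ∞)) (xs : List R)
    (hxl : xs.length = d) (hxm : ∀ r ∈ xs, r ∈ maximalIdeal R) (hxw : IsWeaklyRegular R xs)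
    (Ω : Type) [AddCommGroup Ω] [Module R Ω] [Module.Finite R Ω] (hΩ : IsWeaklyRegular Ω xs)
    (ys : List R) (hym : ∀ r ∈ ys, r ∈ maximalIdeal R) (hyw : IsWeaklyRegular R ys) :
    IsWeaklyRegular Ω ys := by
  obtain ⟨ws, ⟨zs, hz⟩, hm, hw, q, hq, hmq⟩ := maxreg d hdim (maximalIdeal R) le_rfl d ys (by omega) hym hyw
  obtain ⟨hqp, z, -, f, hf⟩ := ass_emb hq
  have hqm : q = maximalIdeal R :=
    ((maximalIdeal.isMaximal R).eq_of_le hqp.ne_top hmq).symm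
  subst hqm
  obtain ⟨e, he, hel⟩ := dim_quot d hdim _ hm hw
  have hle : d ≤ ws.length := by
    by_contra hlt
    push Not at hlt
    have h1 := V_of_QZ (C2 (N := Q xs R) ws hw f hf d (fun X _ _ _ n hn =>
      (V_symm n).1 (V_QR xs hxw n (by omega))) 1 (d-1) (by omega) (by omega)
      (R ⧸ maximalIdeal R))
    exact res_nonvan xs hxm hxw (d-1) (by omega) ((V_symm _).1 h1)
  have he0 : e = 0 := by omega
  have hV : ∀ i, V R i Ω (Q ws R) := fun i =>
    trickE ws.length (fun X _ _ i hi => (V_symm i).1 (V_QR _ hw i hi)) xs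
      (fun r hr => nilp _ (by rw [he, he0]; simp) r (hxm r hr)) Ω hΩ i (by omega)
  have := F4R (Y := Ω) ws hm hw (fun i => (V_symm i).1 (hV i))
  rw [hz] at this
  exact ((isWeaklyRegular_append_iff _ _ _).1 this).1

theorem claimB (d : ℕ) (hdim : ringKrullDim R = (d : WithBot ℕ∞))
    (Ω N : Type) [AddCommGroup Ω] [Module R Ω] [Module.Finite R Ω]
    [AddCommGroup N] [Module R N] [Module.Finite R N]
    (hΩ : ∀ ys : List R, (∀ r ∈ ys, r ∈ maximalIdeal R) → IsWeaklyRegular R ys →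
      IsWeaklyRegular Ω ys) (n1 : ℕ)
    (hN : ∀ (X : Type) [AddCommGroup X] [Module R X] [Module.Finite R X],
      ∀ n, n1 ≤ n → V R n X N) (k : ℕ) : ∀ s, n1 ≤ s + k → V R s Ω N := by
  induction k with
  | zero => intro s hs; exact hN Ω s hs
  | succ k ih =>
    intro s hs
    by_contra hne
    have hnt : Nontrivial (T R s Ω N) := not_subsingleton_iff_nontrivial.1 hne
    obtain ⟨p, hp⟩ := associatedPrimes.nonempty R (T R s Ω N)
    obtain ⟨hpp, t, ht, -⟩ := ass_emb hp
    have hpm := IsLocalRing.le_maximalIdeal hpp.ne_top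
    obtain ⟨zs, -, hm, hw, q, hq, hpq⟩ := maxreg d hdim p hpm d [] (by omega) (by simp) (by simp)
    obtain ⟨hqp, z, -, f, hf⟩ := ass_emb hq
    obtain ⟨u, hu, hut⟩ := DD (q := q) (N := N) zs Ω (hΩ zs (fun r hr => hpm (hm r hr)) hw) s t
      (fun i hi => ih i (by omega)) (fun r hr => (ht r).1 (hm r hr))
      (C2 (N := N) zs hw f hf n1 hN n1 _ (by omega) (by omega) _)
    exact hu (hpq ((ht u).2 hut))

end I
end MT


namespace MT

lemma depth_seq {S : Type} [CommRing S] [IsLocalRing S] (M : Type) [AddCommGroup M] [Module S M]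
    (t : ℕ) (h : depth S M = (t : ℕ∞)) : ∃ rs : List S, (∀ x ∈ rs, x ∈ maximalIdeal S) ∧
      RingTheory.Sequence.IsWeaklyRegular M rs ∧ rs.length = t := by
  unfold depth at h
  rcases Set.eq_empty_or_nonempty {n : ℕ∞ | ∃ rs : List S, (∀ x ∈ rs, x ∈ maximalIdeal S) ∧
    RingTheory.Sequence.IsRegular M rs ∧ (rs.length : ℕ∞) = n} with he | hne
  · rw [he, sSup_empty, bot_eq_zero] at h
    have : t = 0 := by exact_mod_cast h.symm
    exact ⟨[], by simp, by simp, by simp [this]⟩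
  · have := hne.to_subtype
    have := ENat.sSup_mem_of_nonempty_of_lt_top (by rw [h]; exact ENat.coe_lt_top t :
      sSup {n : ℕ∞ | ∃ rs : List S, (∀ x ∈ rs, x ∈ maximalIdeal S) ∧
      RingTheory.Sequence.IsRegular M rs ∧ (rs.length : ℕ∞) = n} < ⊤)
    rw [h] at this
    obtain ⟨rs, h1, h2, h3⟩ := this
    exact ⟨rs, h1, h2.toIsWeaklyRegular, by exact_mod_cast h3⟩

end MT

theorem statement17 (R : Type) [CommRing R] [IsNoetherianRing R] [IsLocalRing R]
    (d : ℕ) (hdim : ringKrullDim R = (d : WithBot ℕ∞)) (hCM : depth R R = (d : ℕ∞))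
    (hmin : HasMinimalMultiplicity R d)
    (c : ℕ) (fs : List R) (hlen : fs.length = c) (hmem : ∀ x ∈ fs, x ∈ maximalIdeal R)
    (hreg : RingTheory.Sequence.IsWeaklyRegular R fs)
    [IsLocalRing (R ⧸ Ideal.ofList fs)]
    (M N : Type) [AddCommGroup M] [Module R M] [Module (R ⧸ Ideal.ofList fs) M]
    [Module.Finite (R ⧸ Ideal.ofList fs) M]
    (hMcompat : ∀ (r : R) (a : M), (Ideal.Quotient.mk (Ideal.ofList fs) r) • a = r • a)
    [AddCommGroup N] [Module R N] [Module (R ⧸ Ideal.ofList fs) N]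
    [Module.Finite (R ⧸ Ideal.ofList fs) N]
    (hNcompat : ∀ (r : R) (a : N), (Ideal.Quotient.mk (Ideal.ofList fs) r) • a = r • a)
    (dS tS : ℕ) (hdS : ringKrullDim (R ⧸ Ideal.ofList fs) = (dS : WithBot ℕ∞))
    (htS : depth (R ⧸ Ideal.ofList fs) M = (tS : ℕ∞)) :
    ((∃ a : ℕ, dS - tS + 2 ≤ a ∧ ∀ i : ℕ, a ≤ i → i ≤ a + (d + c) →
        TorVanish (R ⧸ Ideal.ofList fs) M N i) ↔
      (∀ i : ℕ, dS - tS + 1 ≤ i → TorVanish (R ⧸ Ideal.ofList fs) M N i)) ∧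
    ((∀ i : ℕ, dS - tS + 1 ≤ i → TorVanish (R ⧸ Ideal.ofList fs) M N i) →
      ProjDimFinite R M ∨ ProjDimFinite R N) := by
  classical
  have hscM : IsScalarTower R (R ⧸ Ideal.ofList fs) M :=
    IsScalarTower.of_algebraMap_smul (fun r a => hMcompat r a)
  have hscN : IsScalarTower R (R ⧸ Ideal.ofList fs) N :=
    IsScalarTower.of_algebraMap_smul (fun r a => hNcompat r a)
  have hfM : Module.Finite R M := Module.Finite.trans (R ⧸ Ideal.ofList fs) M
  have hfN : Module.Finite R N := Module.Finite.trans (R ⧸ Ideal.ofList fs) N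
  have key : ∀ a : ℕ, dS - tS + 2 ≤ a → (∀ i : ℕ, a ≤ i → i ≤ a + (d + c) →
      TorVanish (R ⧸ Ideal.ofList fs) M N i) →
      (∀ i : ℕ, dS - tS + 1 ≤ i → TorVanish (R ⧸ Ideal.ofList fs) M N i) ∧
      (ProjDimFinite R M ∨ ProjDimFinite R N) := by
    intro a ha h
    obtain ⟨xs, hxl, hxm, hxw, hx2⟩ := hmin
    have hx2' : maximalIdeal R ^ 2 ≤ Ideal.ofList xs := hx2.le.trans Ideal.mul_le_left
    obtain ⟨e, he, hel⟩ := MT.dim_quot d hdim fs hmem hreg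
    have hedS : e = dS := by
      rw [he] at hdS; exact_mod_cast hdS
    obtain ⟨rs, hrm, hrw, hrl⟩ := MT.depth_seq M tS htS
    obtain ⟨rs', rfl⟩ : ∃ rs' : List R, rs'.map (algebraMap R (R ⧸ Ideal.ofList fs)) = rs :=
      List.map_surjective_iff.2 Ideal.Quotient.mk_surjective rs
    have hrw' : RingTheory.Sequence.IsWeaklyRegular M rs' :=
      (RingTheory.Sequence.isWeaklyRegular_map_algebraMap_iff _ M rs').1 hrw
    rw [List.length_map] at hrl
    have hrm' : ∀ r ∈ rs', r ∈ maximalIdeal R := by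
      intro r hr
      have := hrm _ (List.mem_map_of_mem hr)
      rw [mem_maximalIdeal, mem_nonunits_iff] at this ⊢
      exact fun hu => this (hu.map _)
    have hVM : ∀ i, d ≤ i + tS → MT.V R i M (MT.Q xs R) := fun i hi =>
      MT.trickE d (fun X _ _ i hi => (MT.V_symm i).1 (MT.V_QR xs hxw i (by omega))) rs'
        (fun r hr => ⟨2, fun y => by
          obtain ⟨y, rfl⟩ := Submodule.Quotient.mk_surjective _ y
          rw [← Submodule.Quotient.mk_smul, Submodule.Quotient.mk_eq_zero]
          exact Submodule.smul_mem_smul (hx2' (Ideal.pow_mem_pow (hrm' r hr) 2)) trivial⟩)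
        M hrw' i (by omega)
    obtain ⟨Ω, _, _, _, hΩ⟩ := MT.exists_syz (R := R) (dS - tS + c) M
    have hVΩ : ∀ i, MT.V R i (MT.Q xs R) Ω := fun i =>
      (MT.V_symm i).1 ((hΩ i _).2 (hVM _ (by omega)))
    have hΩx : RingTheory.Sequence.IsWeaklyRegular Ω xs := MT.F4R xs hxm hxw hVΩ
    have hch := MT.chain (S := R ⧸ Ideal.ofList fs) M N c R fs hlen hreg
      Ideal.Quotient.mk_surjective (fun a => Ideal.Quotient.eq_zero_iff_mem)
    have hS : ∀ i, a - 1 ≤ i → i ≤ a - 1 + c + d → MT.V (R ⧸ Ideal.ofList fs) i M N :=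
      fun i h1 h2 => (MT.link i).1 (h (i+1) (by omega) (by omega))
    have hR := hch.1 (a - 1) d hS
    have hdich := MT.dich (N := N) xs hxm hxw hx2' hVΩ (a - 2 - (dS - tS)) (fun i h1 h2 =>
      (hΩ i N).2 (hR _ (by omega) (by omega)))
    have main : (∀ i, MT.V R i Ω N) ∧ (ProjDimFinite R M ∨ ProjDimFinite R N) := by
      rcases hdich with h1 | h1
      · refine ⟨fun i => h1 i N, Or.inl (MT.pdFinite_of_V (dS - tS + c) M fun X _ _ _ => ?_)⟩
        have := (hΩ 0 X).1 (h1 0 X)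
        rw [zero_add] at this
        exact (MT.V_symm _).1 this
      · have hN := fun (X : Type) [AddCommGroup X] [Module R X] [Module.Finite R X] (n : ℕ)
          (hn : _ ≤ n) => MT.V_all _ h1 n hn X
        refine ⟨fun i => MT.claimB d hdim Ω N
          (MT.claimA d hdim xs hxl hxm hxw Ω hΩx) _ hN _ i (Nat.le_add_left _ _), Or.inr ?_⟩
        exact MT.pdFinite_of_V _ N fun X _ _ _ => hN X _ le_rfl
    refine ⟨fun i hi => ?_, main.2⟩
    obtain ⟨i, rfl⟩ : ∃ j, i = j + 1 := ⟨i - 1, by omega⟩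
    rw [MT.link]
    refine hch.2 (dS - tS) (a - 1) (by omega) (fun i hi => ?_)
      (fun i h1 h2 => hS i h1 (by omega)) i (by omega)
    have := (hΩ (i - (dS - tS + c)) N).1 (main.1 _)
    rwa [Nat.sub_add_cancel hi] at this
  exact ⟨⟨fun ⟨a, ha, h⟩ => (key a ha h).1, fun h => ⟨dS - tS + 2, le_rfl, fun i hi _ =>
    h i (by omega)⟩⟩, fun h => (key (dS - tS + 2) le_rfl (fun i hi _ => h i (by omega))).2⟩
end

section
/- Let (R, m, k) be a Cohen–Macaulay commutative Noetherian local ring of dimension d with minimal multiplicity, i.e., there exists an R-regular sequence x₁, …, x_d ∈ m with m² = (x₁, …, x_d)m. Let f₁, …, f_c ∈ m be an R-regular sequence and set S = R/(f₁, …, f_c). Let M be a finitely generated S-module and set i₀ = dim(S) − depth_S(M). Then M is (d + c + i₀ + 2)-Tor-rigid over S: for every finitely generated S-module N, if Tor_i^S(M, N) = 0 for all n ≤ i ≤ n + d + c + i₀ + 1 for some n ≥ 1, then Tor_i^S(M, N) = 0 for all i ≥ n. -/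
open CategoryTheory IsLocalRing

namespace TV
open TensorProduct

structure SES {R : Type} [CommRing R] {A B C : Type} [AddCommGroup A] [AddCommGroup B]
    [AddCommGroup C] [Module R A] [Module R B] [Module R C]
    (f : A →ₗ[R] B) (g : B →ₗ[R] C) : Prop where
  inj : Function.Injective f
  exact : Function.Exact f g
  surj : Function.Surjective g

section
variable {R : Type} [CommRing R]
  {A : Type} [AddCommGroup A] [Module R A]
  {B : Type} [AddCommGroup B] [Module R B]
  {C : Type} [AddCommGroup C] [Module R C]
  {X : Type} [AddCommGroup X] [Module R X]
  {G : Type} [AddCommGroup G] [Module R G]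
  {Y : Type} [AddCommGroup Y] [Module R Y]
  {M : Type} [AddCommGroup M] [Module R M]
  {N : Type} [AddCommGroup N] [Module R N]

lemma lr (M : Type) [AddCommGroup M] [Module R M] (f : A →ₗ[R] B) :
    Function.Injective (f.lTensor M) ↔ Function.Injective (f.rTensor M) :=
  LinearMap.lTensor_inj_iff_rTensor_inj M f

lemma sw1 (f : A →ₗ[R] B) (p : Y →ₗ[R] G) (z : A ⊗[R] Y) :
    f.rTensor G (p.lTensor A z) = p.lTensor B (f.rTensor Y z) := by
  rw [← LinearMap.comp_apply, ← LinearMap.comp_apply, LinearMap.rTensor_comp_lTensor,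
    LinearMap.lTensor_comp_rTensor]

lemma chase {f : A →ₗ[R] B} {g : B →ₗ[R] C} {p : Y →ₗ[R] G} {q : G →ₗ[R] X}
    (hs : SES f g) (ht : SES p q) (hB : Function.Injective (p.lTensor B))
    (hX : Function.Injective (f.rTensor X)) : Function.Injective (p.lTensor C) := by
  rw [injective_iff_map_eq_zero]
  intro z hz
  obtain ⟨u, rfl⟩ := LinearMap.rTensor_surjective Y hs.surj z
  rw [← sw1] at hz
  obtain ⟨v, hv⟩ := ((rTensor_exact G hs.exact hs.surj) _).1 hz
  have hw : q.lTensor A v = 0 := by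
    apply hX
    rw [sw1, hv, map_zero, ((lTensor_exact B ht.exact ht.surj) _).2 ⟨u, rfl⟩]
  obtain ⟨v', rfl⟩ := ((lTensor_exact A ht.exact ht.surj) _).1 hw
  rw [sw1] at hv
  rw [← hB hv]
  exact ((rTensor_exact Y hs.exact hs.surj) _).2 ⟨v', rfl⟩

lemma chase2 {f : A →ₗ[R] B} {g : B →ₗ[R] C} {p : Y →ₗ[R] G} {q : G →ₗ[R] X}
    (hs : SES f g) (ht : SES p q) (hG : Function.Injective (f.rTensor G))
    (hC : Function.Injective (p.lTensor C)) : Function.Injective (f.rTensor X) := by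
  rw [← lr] at hG ⊢
  rw [lr] at hC
  exact chase ht hs hG hC

lemma flatl [Module.Flat R M] {f : A →ₗ[R] B} (hf : Function.Injective f) :
    Function.Injective (f.lTensor M) := Module.Flat.lTensor_preserves_injective_linearMap f hf
lemma flatr [Module.Flat R M] {f : A →ₗ[R] B} (hf : Function.Injective f) :
    Function.Injective (f.rTensor M) := Module.Flat.rTensor_preserves_injective_linearMap f hf

variable (R) in
def Cv (N : Type) [AddCommGroup N] [Module R N] : Type := N →₀ R
noncomputable instance : AddCommGroup (Cv R N) := inferInstanceAs (AddCommGroup (N →₀ R))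
noncomputable instance : Module R (Cv R N) := inferInstanceAs (Module R (N →₀ R))
instance : Module.Free R (Cv R N) := inferInstanceAs (Module.Free R (N →₀ R))

variable (R) in
noncomputable def cov (N : Type) [AddCommGroup N] [Module R N] : Cv R N →ₗ[R] N :=
  Finsupp.linearCombination R (id : N → N)

variable (R) in
def Om (N : Type) [AddCommGroup N] [Module R N] : Type := LinearMap.ker (cov R N)
noncomputable instance : AddCommGroup (Om R N) :=
  inferInstanceAs (AddCommGroup (LinearMap.ker (cov R N)))
noncomputable instance : Module R (Om R N) :=
  inferInstanceAs (Module R (LinearMap.ker (cov R N)))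

variable (R) in
noncomputable def inc (N : Type) [AddCommGroup N] [Module R N] : Om R N →ₗ[R] Cv R N :=
  (LinearMap.ker (cov R N)).subtype

lemma ker_ses {g : B →ₗ[R] C} (hg : Function.Surjective g) :
    SES (LinearMap.ker g).subtype g :=
  ⟨Subtype.val_injective, LinearMap.exact_subtype_ker_map g, hg⟩

variable (R) in
lemma om_ses (N : Type) [AddCommGroup N] [Module R N] : SES (inc R N) (cov R N) where
  inj := Subtype.val_injective
  exact := LinearMap.exact_subtype_ker_map (cov R N)
  surj := Finsupp.linearCombination_id_surjective R N

lemma om_lift {D : Type} [AddCommGroup D] [Module R D] (h : D →ₗ[R] Cv R N)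
    (hh : ∀ x, cov R N (h x) = 0) : ∃ k : D →ₗ[R] Om R N, ∀ x, inc R N (k x) = h x :=
  ⟨LinearMap.codRestrict (LinearMap.ker (cov R N)) h hh, fun _ => rfl⟩

variable (R) in
/-- `T i M N` means `Tor_{i+1}(M,N) = 0`. -/
def T (M : Type) [AddCommGroup M] [Module R M] :
    ℕ → ∀ (N : Type) [AddCommGroup N] [Module R N], Prop
  | 0, N, _, _ => Function.Injective ((inc R N).lTensor M)
  | (i+1), N, _, _ => T M i (Om R N)

lemma T_succ (i : ℕ) : T R M (i+1) N ↔ T R M i (Om R N) := Iff.rfl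

/-- computing Tor_1 by a flat presentation of the second variable -/
lemma T0_snd [Module.Flat R G] {p : Y →ₗ[R] G} {q : G →ₗ[R] X} (ht : SES p q) :
    T R M 0 X ↔ Function.Injective (p.lTensor M) := by
  constructor
  · intro h
    exact chase (om_ses R M) ht (flatl ht.inj) (chase2 (om_ses R M) (om_ses R X) (flatr (om_ses R M).inj) h)
  · intro h
    exact chase (om_ses R M) (om_ses R X) (flatl (om_ses R X).inj) (chase2 (om_ses R M) ht (flatr (om_ses R M).inj) h)

lemma T0_fst [Module.Flat R B] {f : A →ₗ[R] B} {g : B →ₗ[R] C} (hs : SES f g) :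
    T R C 0 N ↔ Function.Injective (f.rTensor N) := by
  constructor
  · intro h
    exact chase2 hs (om_ses R N) (flatr hs.inj) h
  · intro h
    exact chase hs (om_ses R N) (flatl (om_ses R N).inj) h

lemma T0_symm : T R M 0 N ↔ T R N 0 M := by
  rw [T0_fst (om_ses R M), T0_snd (om_ses R M), lr]

lemma T1_base [Module.Flat R G] [Module.Flat R B] {p : Y →ₗ[R] G} {q : G →ₗ[R] X}
    {f : A →ₗ[R] B} {g : B →ₗ[R] C} (hs : SES f g) (ht : SES p q) :
    T R C 0 Y ↔ T R A 0 X := by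
  rw [T0_fst hs, T0_snd ht]
  have h1 : Function.Injective (p.lTensor B) := flatl ht.inj
  have h2 : Function.Injective (f.rTensor G) := flatr hs.inj
  have e : ∀ z, f.rTensor G (p.lTensor A z) = p.lTensor B (f.rTensor Y z) := sw1 f p
  constructor
  · intro h a b hab
    exact h (h1 (by rw [← e, ← e, hab]))
  · intro h a b hab
    exact h (h2 (by rw [e, e, hab]))

lemma T_fst [Module.Flat R B] {f : A →ₗ[R] B} {g : B →ₗ[R] C} (hs : SES f g) (i : ℕ) :
    T R C (i+1) N ↔ T R A i N := by
  induction i generalizing N with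
  | zero => exact T1_base hs (om_ses R N)
  | succ i ih => exact ih (N := Om R N)

lemma T_snd [Module.Flat R G] {p : Y →ₗ[R] G} {q : G →ₗ[R] X} (ht : SES p q) (i : ℕ) :
    T R M (i+1) X ↔ T R M i Y := by
  induction i generalizing M with
  | zero => rw [T_fst (om_ses R M), T1_base (om_ses R M) ht]
  | succ i ih => rw [T_fst (om_ses R M), ih, T_fst (om_ses R M)]

lemma T_symm (i : ℕ) : T R M i N ↔ T R N i M := by
  induction i generalizing M with
  | zero => exact T0_symm
  | succ i ih => rw [T_fst (om_ses R M), ih, T_succ]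

lemma T_flat_fst [Module.Flat R M] (i : ℕ) : T R M i N := by
  induction i generalizing N with
  | zero => exact flatl (om_ses R N).inj
  | succ i ih => exact ih

lemma T_flat_snd [Module.Flat R N] (i : ℕ) : T R M i N := (T_symm i).2 (T_flat_fst i)

lemma flat_of_T0 (h : ∀ (Y : Type) [AddCommGroup Y] [Module R Y], T R Y 0 M) :
    Module.Flat R M := by
  rw [Module.Flat.iff_lTensor_injective']
  intro I
  have := (T0_snd (M := M) (ker_ses (g := I.mkQ) I.mkQ_surjective)).1 ((T_symm 0).2 (h _))
  have e : LinearMap.ker I.mkQ = I := I.ker_mkQ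
  rw [e] at this
  exact this

/-- retracts -/
lemma T_retract {s : M →ₗ[R] X} {r : X →ₗ[R] M} (h : ∀ m, r (s m) = m) (i : ℕ)
    (hX : T R X i N) : T R M i N := by
  induction i generalizing N with
  | succ i ih => exact ih hX
  | zero =>
    intro a b hab
    have hX : Function.Injective _ := hX
    have : s.rTensor (Om R N) a = s.rTensor (Om R N) b := by
      apply hX
      rw [← sw1, ← sw1, hab]
    have h2 : r ∘ₗ s = LinearMap.id := LinearMap.ext h
    have h3 := congrArg (r.rTensor (Om R N)) this
    rwa [← LinearMap.comp_apply, ← LinearMap.comp_apply, ← LinearMap.rTensor_comp, h2,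
      LinearMap.rTensor_id] at h3

lemma T_congr_fst (e : M ≃ₗ[R] X) (i : ℕ) (h : T R X i N) : T R M i N :=
  T_retract (s := e.toLinearMap) (r := e.symm.toLinearMap) (by simp) i h

lemma T_congr_snd (e : M ≃ₗ[R] X) (i : ℕ) (h : T R N i X) : T R N i M :=
  (T_symm i).2 (T_congr_fst e i ((T_symm i).2 h))

variable {f : A →ₗ[R] B} {g : B →ₗ[R] C}

/-- middle -/
lemma L1 (hs : SES f g) (i : ℕ) (hA : T R A i N) (hC : T R C i N) : T R B i N := by
  induction i generalizing N with
  | succ i ih => exact ih hA hC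
  | zero =>
    have hA : Function.Injective _ := hA
    have hC : Function.Injective _ := hC
    show Function.Injective _
    rw [injective_iff_map_eq_zero]
    intro b hb
    have : g.rTensor (Om R N) b = 0 := by
      apply hC
      rw [← sw1, hb, map_zero, map_zero]
    obtain ⟨a, rfl⟩ := ((rTensor_exact (Om R N) hs.exact hs.surj) _).1 this
    rw [← sw1] at hb
    have h2 : Function.Injective (f.rTensor (Cv R N)) := flatr hs.inj
    have : (inc R N).lTensor A a = 0 := h2 (by rw [hb, map_zero])
    rw [hA (this.trans (map_zero _).symm), map_zero]

lemma inj_of_T0 (hs : SES f g) (h : T R C 0 N) : Function.Injective (f.rTensor N) :=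
  chase2 hs (om_ses R N) (flatr hs.inj) h

lemma T0_of_inj (hs : SES f g) (hB : T R B 0 N) (h : Function.Injective (f.rTensor N)) :
    T R C 0 N := chase hs (om_ses R N) hB h

/-- right -/
lemma L2 (hs : SES f g) (i : ℕ) (hB : T R B (i+1) N) (hA : T R A i N) : T R C (i+1) N := by
  induction i generalizing N with
  | succ i ih => exact ih (N := Om R N) hB hA
  | zero =>
    refine T0_of_inj (N := Om R N) hs hB ?_
    have hA : Function.Injective _ := hA
    have h2 : Function.Injective (f.rTensor (Cv R N)) := flatr hs.inj
    intro a b hab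
    exact hA (h2 (by rw [sw1, sw1, hab]))

/-- left -/
lemma L3 (hs : SES f g) (i : ℕ) (hB : T R B i N) (hC : T R C (i+1) N) : T R A i N := by
  induction i generalizing N with
  | succ i ih => exact ih (N := Om R N) hB hC
  | zero =>
    have hB : Function.Injective _ := hB
    have h2 := inj_of_T0 (N := Om R N) hs hC
    intro a b hab
    exact h2 (hB (by rw [← sw1, ← sw1, hab]))

lemma L1' (hs : SES f g) (i : ℕ) (hA : T R N i A) (hC : T R N i C) : T R N i B := by
  rw [T_symm] at *; exact L1 hs i hA hC
lemma L2' (hs : SES f g) (i : ℕ) (hB : T R N (i+1) B) (hA : T R N i A) : T R N (i+1) C := by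
  rw [T_symm] at *; exact L2 hs i hB hA
lemma L3' (hs : SES f g) (i : ℕ) (hB : T R N i B) (hC : T R N (i+1) C) : T R N i A := by
  rw [T_symm] at *; exact L3 hs i hB hC

open Pointwise in
lemma quot_ses (y : R) (hy : IsSMulRegular M y) :
    SES (LinearMap.lsmul R M y) (Submodule.mkQ (y • (⊤ : Submodule R M)) : M →ₗ[R] QuotSMulTop y M) := by
  refine ⟨hy, ?_, Submodule.mkQ_surjective _⟩
  intro m
  simp [Submodule.mem_smul_pointwise_iff_exists]

/-- the multiplication trick -/
lemma T3 (y r : R) (hr : r = y ^ 2) (hy : IsSMulRegular M y) (i : ℕ)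
    (φ : Cv R N →ₗ[R] Om R N) (hφ : ∀ b, φ (inc R N b) = r • b)
    (h : T R (QuotSMulTop y M) (i+1) N) : T R M i N := by
  have hs := quot_ses y hy
  induction i generalizing N with
  | zero =>
    have h2 := inj_of_T0 (N := Om R N) hs h
    show Function.Injective _
    rw [injective_iff_map_eq_zero]
    intro z hz
    have e : ∀ z, (LinearMap.lsmul R M y).rTensor (Om R N) z = y • z := by
      intro z
      have : (LinearMap.lsmul R M y).rTensor (Om R N) = LinearMap.lsmul R _ y := by
        ext; simp [smul_tmul']
      rw [this]; rfl
    have hz2 := congrArg (φ.lTensor M) hz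
    rw [← LinearMap.comp_apply, ← LinearMap.lTensor_comp, map_zero] at hz2
    have : φ ∘ₗ (inc R N) = r • LinearMap.id := by ext1 b; exact hφ b
    rw [this, LinearMap.lTensor_smul, LinearMap.lTensor_id, hr] at hz2
    apply h2; apply h2
    rw [e, e, smul_smul, ← pow_two, map_zero, map_zero]
    exact hz2
  | succ i ih =>
    obtain ⟨ψ, hψ⟩ := Module.projective_lifting_property (cov R (Om R N)) φ (om_ses R _).surj
    have hψ' : ∀ c, cov R (Om R N) (ψ c) = φ c := fun c => LinearMap.congr_fun hψ c
    obtain ⟨k, hk⟩ := om_lift (r • LinearMap.id - ψ ∘ₗ inc R N ∘ₗ cov R (Om R N)) (by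
      intro c
      rw [LinearMap.sub_apply, map_sub, LinearMap.comp_apply, LinearMap.comp_apply, hψ', hφ]
      simp)
    refine ih (N := Om R N) k ?_ h
    intro b
    apply (om_ses R _).inj
    have hb : cov R (Om R N) (inc R _ b) = 0 := ((om_ses R _).exact _).2 ⟨b, rfl⟩
    simp [hk, hb]

lemma T3' (y : R) (hy : IsSMulRegular M y) (hN : ∀ n : N, y ^ 2 • n = 0) (i : ℕ)
    (h : T R N (i+1) (QuotSMulTop y M)) : T R N i M := by
  rw [T_symm] at h ⊢
  obtain ⟨k, hk⟩ := om_lift (R := R) (N := N) (y^2 • LinearMap.id) (by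
    intro c
    exact (map_smul (cov R N) (y^2) c).trans (hN _))
  refine T3 y _ rfl hy i k ?_ h
  intro b
  apply (om_ses R _).inj
  simp [hk]

end
end TV

namespace TV
open TensorProduct
section
variable {R : Type} [CommRing R] {M : Type} [AddCommGroup M] [Module R M]

lemma T_res (P : ℕ → Type) [∀ j, AddCommGroup (P j)] [∀ j, Module R (P j)]
    [∀ j, Module.Flat R (P j)] (d : ∀ j, P (j+1) →ₗ[R] P j)
    (hd : ∀ j, Function.Exact (d (j+1)) (d j))
    {N : Type} [AddCommGroup N] [Module R N] (π : P 0 →ₗ[R] N) (hπ : Function.Surjective π)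
    (h0 : Function.Exact (d 0) π) (i : ℕ) :
    T R M i N ↔ Function.Exact ((d (i+1)).lTensor M) ((d i).lTensor M) := by
  have hc : ∀ x, d 0 x ∈ LinearMap.ker π := fun x => (h0 _).2 ⟨x, rfl⟩
  let q : P 1 →ₗ[R] LinearMap.ker π := (d 0).codRestrict _ hc
  have hq : Function.Surjective q := by
    rintro ⟨x, hx⟩
    obtain ⟨y, rfl⟩ := (h0 x).1 hx
    exact ⟨y, rfl⟩
  have hdq : (LinearMap.ker π).subtype ∘ₗ q = d 0 := rfl
  have h1 : Function.Exact (d 1) q := by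
    intro x
    rw [← hd 0 x, ← hdq, LinearMap.comp_apply]
    exact (map_eq_zero_iff _ Subtype.val_injective).symm
  induction i generalizing P N with
  | zero =>
    rw [T0_snd (ker_ses hπ)]
    have e := lTensor_exact M h1 hq
    have hd0 : (d 0).lTensor M = (LinearMap.ker π).subtype.lTensor M ∘ₗ q.lTensor M := by
      rw [← LinearMap.lTensor_comp, hdq]
    constructor
    · intro h x
      rw [← e x, hd0, LinearMap.comp_apply]
      exact map_eq_zero_iff _ h
    · intro h
      rw [injective_iff_map_eq_zero]
      intro z hz
      obtain ⟨x, rfl⟩ := LinearMap.lTensor_surjective M hq z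
      rw [← LinearMap.comp_apply, ← hd0] at hz
      exact (e x).2 ((h x).1 hz)
  | succ i ih =>
    rw [T_snd (ker_ses hπ)]
    have hc' : ∀ x, d 1 x ∈ LinearMap.ker q := fun x => (h1 _).2 ⟨x, rfl⟩
    refine ih (fun j => P (j+1)) (fun j => d (j+1)) (fun j => hd (j+1)) q hq h1 hc' ?_ rfl ?_
    · rintro ⟨x, hx⟩
      obtain ⟨y, rfl⟩ := (h1 x).1 hx
      exact ⟨y, rfl⟩
    · intro x
      rw [← hd 1 x]
      exact (map_eq_zero_iff (LinearMap.ker q).subtype Subtype.val_injective).symm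

theorem torVanish_iff (N : Type) [AddCommGroup N] [Module R N] (i : ℕ) :
    TorVanish R M N (i+1) ↔ T R M i N := by
  let P := projectiveResolution (ModuleCat.of R N)
  have hflat : ∀ j, Module.Flat R (P.complex.X j) := fun j => by
    have : Projective (P.complex.X j) := P.projective j
    have : Module.Projective R (P.complex.X j) := (IsProjective.iff_projective _).2 this
    infer_instance
  rw [T_res (fun j => P.complex.X j) (fun j => (P.complex.d (j+1) j).hom) ?_
    (N := N) (show P.complex.X 0 ⟶ ModuleCat.of R N from P.π.f 0).hom ?_ ?_]
  · unfold TorVanish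
    let F := (MonoidalCategory.tensoringLeft (ModuleCat R)).obj (ModuleCat.of R M)
    rw [← ModuleCat.isZero_iff_subsingleton]
    have e := (P.isoLeftDerivedObj F (i+1)).isZero_iff
    refine e.trans ?_
    refine (HomologicalComplex.exactAt_iff_isZero_homology _ _).symm.trans ?_
    rw [HomologicalComplex.exactAt_iff' _ (i+2) (i+1) i (by simp) (by simp)]
    rw [ShortComplex.ShortExact.moduleCat_exact_iff_function_exact]
    exact Iff.rfl
  · intro j
    have := P.exact_succ j
    rw [ShortComplex.ShortExact.moduleCat_exact_iff_function_exact] at this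
    exact this
  · have : Epi (P.π.f 0) := inferInstance
    exact (ModuleCat.epi_iff_surjective _).1 this
  · have := ShortComplex.exact_of_g_is_cokernel (ShortComplex.mk _ _ P.complex_d_comp_π_f_zero) P.isColimitCokernelCofork
    rw [ShortComplex.ShortExact.moduleCat_exact_iff_function_exact] at this
    exact this
end
end TV

namespace TV
open TensorProduct
section
variable {R : Type} [CommRing R]
  {M : Type} [AddCommGroup M] [Module R M]
  {N : Type} [AddCommGroup N] [Module R N]

open RingTheory.Sequence in
lemma fd_quot (xs : List R) (X : Type) [AddCommGroup X] [Module R X]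
    (hX : IsWeaklyRegular X xs) (e : ℕ)
    (h : ∀ (Y : Type) [AddCommGroup Y] [Module R Y] (i : ℕ), e ≤ i → T R Y i X) 
    (Y : Type) [AddCommGroup Y] [Module R Y] (i : ℕ) (hi : e + xs.length ≤ i) :
    T R Y i (X ⧸ (Ideal.ofList xs • ⊤ : Submodule R X)) := by
  induction xs generalizing X e with
  | nil =>
    refine T_congr_snd (Submodule.quotEquivOfEqBot _ (by simp)) i (h Y i (by simpa using hi))
  | cons x xs ih =>
    rw [isWeaklyRegular_cons_iff] at hX
    refine T_congr_snd (Submodule.quotOfListConsSMulTopEquivQuotSMulTopInner X x xs) i ?_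
    refine ih _ hX.2 (e+1) ?_ (by simp at hi ⊢; omega)
    intro Y _ _ i hi
    obtain ⟨i, rfl⟩ : ∃ j, i = j + 1 := ⟨i - 1, by omega⟩
    exact L2' (quot_ses x hX.1) i (h Y _ (by omega)) (h Y _ (by omega))

open RingTheory.Sequence in
lemma depth_van (ys : List R) (X : Type) [AddCommGroup X] [Module R X] (d : ℕ)
    (hX : ∀ y ∈ ys, ∀ x : X, y ^ 2 • x = 0)
    (h : ∀ (Y : Type) [AddCommGroup Y] [Module R Y] (i : ℕ), d ≤ i → T R X i Y)
    (M : Type) [AddCommGroup M] [Module R M] (hM : IsWeaklyRegular M ys)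
    (i : ℕ) (hi : d ≤ i + ys.length) : T R X i M := by
  induction ys generalizing M i with
  | nil => exact h M i hi
  | cons y ys ih =>
    rw [isWeaklyRegular_cons_iff] at hM
    refine T3' y hM.1 (hX y (by simp)) i ?_
    exact ih (fun z hz => hX z (by simp [hz])) _ hM.2 _ (by simp at hi; omega)

lemma flat_tensor {X W : Type} [AddCommGroup X] [Module R X] [AddCommGroup W] [Module R W]
    [Module.Flat R X] (i : ℕ) (h : T R W i N) : T R (X ⊗[R] W) i N := by
  induction i generalizing N with
  | succ i ih => exact ih h
  | zero =>
    have h : Function.Injective _ := h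
    have h2 : Function.Injective (((inc R N).lTensor W).lTensor X) := flatl h
    show Function.Injective _
    have e : (inc R N).lTensor (X ⊗[R] W) = (TensorProduct.assoc R X W _).symm.toLinearMap ∘ₗ
        (((inc R N).lTensor W).lTensor X) ∘ₗ (TensorProduct.assoc R X W _).toLinearMap := by
      ext; rfl
    rw [e]
    simpa using h2

lemma lemmaK (d a : ℕ) (X W : Type) [AddCommGroup X] [Module R X] [AddCommGroup W] [Module R W]
    (h : ∀ (Y : Type) [AddCommGroup Y] [Module R Y] (i : ℕ), d ≤ i → T R Y i X)
    (hXW : ∀ i, T R X i W) (hW : ∀ i, a ≤ i → i ≤ a + d → T R W i N) :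
    T R (X ⊗[R] W) (a + d) N := by
  induction d generalizing X with
  | zero =>
    have : Module.Flat R X := flat_of_T0 (fun Y _ _ => h Y 0 le_rfl)
    exact flat_tensor _ (hW _ le_rfl le_rfl)
  | succ d ih =>
    have hs := om_ses R X
    have hs' : SES ((inc R X).rTensor W) ((cov R X).rTensor W) :=
      ⟨inj_of_T0 hs (hXW 0), rTensor_exact W hs.exact hs.surj, LinearMap.rTensor_surjective W hs.surj⟩
    refine L2 hs' (a + d) (flat_tensor _ (hW _ (by omega) le_rfl)) ?_
    refine ih (Om R X) ?_ ?_ ?_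
    · intro Y _ _ i hi
      exact (T_snd hs i).1 (h Y (i+1) (by omega))
    · intro i
      exact (T_fst hs i).1 (hXW (i+1))
    · intro i h1 h2
      exact hW i h1 (by omega)

lemma pd_van [IsNoetherianRing R] [IsLocalRing R] (j : ℕ) (N : Type) [AddCommGroup N] [Module R N]
    [Module.Finite R N] (h : T R (ResidueField R) j N) (Y : Type) [AddCommGroup Y] [Module R Y]
    (i : ℕ) (hi : j ≤ i) : T R Y i N := by
  obtain ⟨n, g, hg⟩ := Module.Finite.exists_fin' R N
  have hs := ker_ses hg
  induction j generalizing N i n with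
  | zero =>
    have := Module.free_of_lTensor_residueField_injective (R := R) _ g hg hs.exact ((T0_snd hs).1 h)
    exact T_flat_snd i
  | succ j ih =>
    obtain ⟨i, rfl⟩ : ∃ j, i = j + 1 := ⟨i - 1, by omega⟩
    rw [T_snd hs] at h ⊢
    obtain ⟨n', g', hg'⟩ := Module.Finite.exists_fin' R (LinearMap.ker g)
    exact ih _ h i (by omega) n' g' hg' (ker_ses hg')

lemma min_pres [IsLocalRing R] (Z : Type) [AddCommGroup Z] [Module R Z]
    [Module.Finite R Z] : ∃ (ι : Type) (_ : Finite ι) (g : (ι →₀ R) →ₗ[R] Z), Function.Surjective g ∧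
      ∀ c ∈ LinearMap.ker g, ∀ i, c i ∈ maximalIdeal R := by
  let w := Module.Free.chooseBasis (ResidueField R) (ResidueField R ⊗[R] Z)
  obtain ⟨v, hv⟩ := (TensorProduct.mk_surjective R Z (ResidueField R)
    Ideal.Quotient.mk_surjective).comp_left w
  have hv' : ∀ i, (1 : ResidueField R) ⊗ₜ[R] v i = w i := fun i => congrFun hv i
  refine ⟨_, inferInstance, Finsupp.linearCombination R v, ?_, ?_⟩
  · rw [← LinearMap.range_eq_top, Finsupp.range_linearCombination]
    exact IsLocalRing.span_eq_top_of_tmul_eq_basis v w hv'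
  · intro c hc i
    rw [LinearMap.mem_ker] at hc
    have h1 := congrArg (fun z => (1 : ResidueField R) ⊗ₜ[R] z) hc
    have hl := linearIndependent_iff.1 w.linearIndependent
      (c.mapRange (residue R) (map_zero _)) (by
        rw [Finsupp.linearCombination_apply, Finsupp.sum_mapRange_index (by simp)]
        simp only [tmul_zero] at h1
        rw [Finsupp.linearCombination_apply, Finsupp.sum, tmul_sum] at h1
        rw [Finsupp.sum, ← h1]
        refine Finset.sum_congr rfl fun i _ => ?_
        rw [tmul_smul, hv', ← algebraMap_smul (ResidueField R) (c i) (w i)]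
        rfl)
    have := DFunLike.congr_fun hl i
    simpa [residue_eq_zero_iff] using this
end
end TV

namespace TV
open TensorProduct
section
variable {R : Type} [CommRing R]

lemma exists_syz [IsNoetherianRing R] (p : ℕ) (M : Type) [AddCommGroup M] [Module R M]
    [Module.Finite R M] : ∃ (Z : Type) (_ : AddCommGroup Z) (_ : Module R Z), Module.Finite R Z ∧
      ∀ (N : Type) [AddCommGroup N] [Module R N] (i : ℕ), T R M (i + p) N ↔ T R Z i N := by
  induction p with
  | zero => exact ⟨M, _, _, inferInstance, fun N _ _ i => Iff.rfl⟩
  | succ p ih =>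
    obtain ⟨Z, _, _, _, hZ⟩ := ih
    obtain ⟨n, g, hg⟩ := Module.Finite.exists_fin' R Z
    refine ⟨LinearMap.ker g, inferInstance, inferInstance, inferInstance, fun N _ _ i => ?_⟩
    rw [← T_fst (ker_ses hg), ← hZ]
    exact iff_of_eq (by congr 1; omega)

lemma retract_k [IsLocalRing R] (Y : Type) [AddCommGroup Y] [Module R Y] [Nontrivial Y]
    (h : ∀ r ∈ maximalIdeal R, ∀ y : Y, r • y = 0) :
    ∃ (s : ResidueField R →ₗ[R] Y) (r : Y →ₗ[R] ResidueField R), ∀ x, r (s x) = x := by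
  have ht : Module.IsTorsionBySet R Y (maximalIdeal R : Set R) := by
    intro y a; exact h a a.2 y
  letI : Module (ResidueField R) Y := ht.module
  haveI : IsScalarTower R (ResidueField R) Y := ht.isScalarTower
  obtain ⟨y, hy⟩ := exists_ne (0 : Y)
  obtain ⟨g, hg⟩ := LinearMap.exists_leftInverse_of_injective
    (LinearMap.toSpanSingleton (ResidueField R) Y y) (by
      exact LinearMap.ker_toSpanSingleton _ hy)
  exact ⟨(LinearMap.toSpanSingleton (ResidueField R) Y y).restrictScalars R, g.restrictScalars R,
    fun x => LinearMap.congr_fun hg x⟩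

open RingTheory.Sequence in
theorem mainR [IsNoetherianRing R] [IsLocalRing R] (d : ℕ) (xs : List R) (hlen : xs.length = d)
    (hxm : ∀ x ∈ xs, x ∈ maximalIdeal R) (hxs : IsWeaklyRegular R xs)
    (hm : maximalIdeal R ^ 2 ≤ Ideal.ofList xs)
    (M : Type) [AddCommGroup M] [Module R M] [Module.Finite R M]
    (N : Type) [AddCommGroup N] [Module R N] [Module.Finite R N]
    (ys : List R) (hym : ∀ x ∈ ys, x ∈ maximalIdeal R) (hys : IsWeaklyRegular M ys)
    (p : ℕ) (hp : d ≤ p + ys.length) (n : ℕ)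
    (h : ∀ j, n + p + 1 ≤ j → j ≤ n + p + d + 1 → T R M j N) (j : ℕ) (hj : n + p + d + 1 ≤ j) :
    T R M j N := by
  let X := R ⧸ (Ideal.ofList xs • ⊤ : Submodule R R)
  have hX : ∀ r ∈ maximalIdeal R, ∀ s ∈ maximalIdeal R, ∀ x : X, (r * s) • x = 0 := by
    intro r hr s hs x
    obtain ⟨a, rfl⟩ := Submodule.mkQ_surjective _ x
    rw [← map_smul, Submodule.mkQ_apply, Submodule.Quotient.mk_eq_zero]
    refine Submodule.smul_mem_smul (hm ?_) trivial
    rw [pow_two]; exact Ideal.mul_mem_mul hr hs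
  have hfd : ∀ (Y : Type) [AddCommGroup Y] [Module R Y] (i : ℕ), d ≤ i → T R Y i X := by
    intro Y _ _ i hi
    exact fd_quot xs R hxs 0 (fun Y _ _ i _ => T_flat_snd i) Y i (by omega)
  have hXM : ∀ i, T R X (i + p) M := by
    intro i
    refine depth_van ys X d ?_ ?_ M hys _ (by omega)
    · intro y hy x
      rw [pow_two]; exact hX y (hym y hy) y (hym y hy) x
    · intro Y _ _ i hi
      exact (T_symm i).1 (hfd Y i hi)
  obtain ⟨Z, _, _, _, hZ⟩ := exists_syz (R := R) p M
  obtain ⟨ι, _, g, hg, hgm⟩ := min_pres (R := R) Z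
  have hXZ : ∀ i, T R X i Z := fun i => by rw [T_symm, ← hZ, T_symm]; exact hXM i
  have hs := ker_ses hg
  let W := LinearMap.ker g
  have hXW : ∀ i, T R X i W := fun i => (T_snd hs i).1 (hXZ _)
  have hWM : ∀ i, T R W i N ↔ T R M (i + p + 1) N := fun i => by
    rw [← T_fst hs, ← hZ]; exact iff_of_eq (by congr 1; omega)
  rcases subsingleton_or_nontrivial W with hW | hW
  · obtain ⟨i, rfl⟩ : ∃ i, j = i + p + 1 := ⟨j - p - 1, by omega⟩
    rw [← hWM]
    exact T_flat_fst i
  · have hK : T R (X ⊗[R] W) (n + d) N := by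
      refine lemmaK d n X W hfd hXW fun i h1 h2 => ?_
      rw [hWM]; exact h _ (by omega) (by omega)
    have hinj := (T0_snd hs).1 (hXZ 0)
    have hkill : ∀ r ∈ maximalIdeal R, ∀ y : X ⊗[R] W, r • y = 0 := by
      intro r hr y
      induction y with
      | zero => simp
      | add a b ha hb => rw [smul_add, ha, hb, add_zero]
      | tmul x w =>
        apply hinj
        rw [map_zero, map_smul, LinearMap.lTensor_tmul, Submodule.subtype_apply,
          ← (w : ι →₀ R).sum_single, Finsupp.sum, tmul_sum, Finset.smul_sum]
        refine Finset.sum_eq_zero fun i _ => ?_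
        rw [← mul_one ((w : ι →₀ R) i), ← smul_eq_mul, ← Finsupp.smul_single, tmul_smul, smul_smul,
          smul_tmul', hX r hr _ (hgm _ w.2 i), zero_tmul]
    have hnt : Nontrivial (X ⊗[R] W) := by
      by_contra hcon
      rw [not_nontrivial_iff_subsingleton] at hcon
      have : Subsingleton (ResidueField R ⊗[R] W) := by
        let q : X →ₗ[R] ResidueField R := Submodule.liftQ _ (Algebra.linearMap R _) (by
          rw [Submodule.smul_le]
          intro r hr s _
          rw [LinearMap.mem_ker, map_smul]
          have : r ∈ maximalIdeal R := by
            have : Ideal.ofList xs ≤ maximalIdeal R := Ideal.span_le.2 hxm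
            exact this hr
          have h2 : residue R r = 0 := (residue_eq_zero_iff r).2 this
          rw [Algebra.smul_def]
          exact (congrArg (· * _) h2).trans (zero_mul _))
        have hq : Function.Surjective q := by
          intro y
          obtain ⟨a, rfl⟩ := residue_surjective y
          exact ⟨Submodule.mkQ _ a, rfl⟩
        exact (LinearMap.rTensor_surjective W hq).subsingleton
      have := (IsLocalRing.subsingleton_tensorProduct (R := R) (M := W)).1 this
      exact not_subsingleton W this
    obtain ⟨s, r, hsr⟩ := retract_k (X ⊗[R] W) hkill
    exact pd_van (n + d) N (T_retract hsr _ hK) M j (by omega)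
end
end TV

namespace TV
open TensorProduct

section
variable {R : Type} [CommRing R] {S : Type} [CommRing S] [Algebra R S]
  {M : Type} [AddCommGroup M] [Module R M] [Module S M] [IsScalarTower R S M]

lemma bc_ses {K G Y : Type} [AddCommGroup K] [Module R K] [AddCommGroup G] [Module R G]
    [AddCommGroup Y] [Module R Y] {p : Y →ₗ[R] G} {q : G →ₗ[R] K} (ht : SES p q)
    (h : Function.Injective (p.lTensor S)) :
    SES (p.baseChange S) (q.baseChange S) := by
  refine ⟨?_, ?_, ?_⟩
  · exact h
  · exact lTensor_exact S ht.exact ht.surj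
  · exact LinearMap.lTensor_surjective S ht.surj

lemma bc_inj {G Y : Type} [AddCommGroup G] [Module R G]
    [AddCommGroup Y] [Module R Y] (p : Y →ₗ[R] G) :
    Function.Injective (p.lTensor M) ↔ Function.Injective ((p.baseChange S).lTensor M) := by
  let eY := AlgebraTensorModule.cancelBaseChange R S S M Y
  let eG := AlgebraTensorModule.cancelBaseChange R S S M G
  have key : ∀ z, eG ((p.baseChange S).lTensor M z) = p.lTensor M (eY z) := by
    intro z
    induction z with
    | zero => simp
    | add a b ha hb => simp only [map_add, ha, hb]
    | tmul m z =>
      induction z with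
      | zero => simp
      | add a b ha hb => simp only [map_add, tmul_add, ha, hb]
      | tmul s y => simp [eY, eG]
  have hfun : (eG ∘ (p.baseChange S).lTensor M) = (p.lTensor M ∘ eY) := funext key
  rw [← eG.injective.of_comp_iff, hfun, Function.Injective.of_comp_iff' _ eY.bijective]

lemma bc (j : ℕ) (K : Type) [AddCommGroup K] [Module R K] (h : ∀ j, T R S j K) :
    T R M j K ↔ T S M j (S ⊗[R] K) := by
  induction j generalizing K with
  | zero =>
    have h0 := bc_ses (S := S) (om_ses R K) (h 0)
    rw [T0_snd h0, T0_snd (om_ses R K), bc_inj (S := S)]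
  | succ j ih =>
    have h0 := bc_ses (S := S) (om_ses R K) (h 0)
    rw [T_snd h0, T_snd (om_ses R K)]
    exact ih _ (fun j => h (j+1))

lemma van_S {f : R} (hs : SES (LinearMap.lsmul R R f) (Algebra.linearMap R S))
    {K : Type} [AddCommGroup K] [Module R K] (hK : IsSMulRegular K f) (j : ℕ) : T R S j K := by
  cases j with
  | succ j => exact L2 hs j (T_flat_fst _) (T_flat_fst _)
  | zero =>
    refine T0_of_inj hs (T_flat_fst _) ?_
    have e : ∀ z, TensorProduct.lid R K ((LinearMap.lsmul R R f).rTensor K z) = f • TensorProduct.lid R K z := by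
      intro z
      induction z with
      | zero => simp
      | add a b ha hb => simp only [map_add, ha, hb, smul_add]
      | tmul m z => simp [mul_smul]
    intro a b hab
    apply (TensorProduct.lid R K).injective
    apply hK
    simp only [← e, hab]

lemma tz {f : R} (hs : SES (LinearMap.lsmul R R f) (Algebra.linearMap R S))
    {K : Type} [AddCommGroup K] [Module R K] (k : K) (h : (1 : S) ⊗ₜ[R] k = 0) :
    ∃ k', k = f • k' := by
  have h2 := (rTensor_exact K hs.exact hs.surj ((1:R) ⊗ₜ k)).1 (by simpa using h)
  obtain ⟨z, hz⟩ := h2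
  have := congrArg (TensorProduct.lid R K) hz
  refine ⟨TensorProduct.lid R K z, ?_⟩
  rw [TensorProduct.lid_tmul, one_smul] at this
  rw [← this]
  clear this hz
  induction z with
  | zero => simp
  | add a b ha hb => simp only [map_add, ha, hb, smul_add]
  | tmul m z => simp [mul_smul]

lemma one_step {f : R} (hs : SES (LinearMap.lsmul R R f) (Algebra.linearMap R S))
    {N : Type} [AddCommGroup N] [Module R N] [Module S N] [IsScalarTower R S N] :
    ∃ (N' : Type) (_ : AddCommGroup N') (_ : Module S N')
      (a : N →ₗ[S] S ⊗[R] Om R N) (b : S ⊗[R] Om R N →ₗ[S] N'), SES a b ∧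
      ∀ i, T S M i N' ↔ T S M (i+1) N := by
  have hsurj : Function.Surjective (algebraMap R S) := hs.surj
  have hf0 : algebraMap R S f = 0 := (hs.exact f).2 ⟨1, by simp⟩
  have hfN : ∀ n : N, f • n = 0 := fun n => by
    rw [← algebraMap_smul S f n, hf0, zero_smul]
  have hfS : ∀ z : S ⊗[R] Om R N, f • z = 0 := fun n => by
    rw [← algebraMap_smul S f n, hf0, zero_smul]
  have hfR : IsSMulRegular R f := hs.inj
  have hG : IsSMulRegular (Cv R N) f := by
    have : IsSMulRegular (N →₀ R) f := by
      intro a b hab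
      ext n
      exact hfR (DFunLike.congr_fun hab n)
    exact this
  obtain ⟨κ, hκ⟩ := om_lift (R := R) (N := N) (f • LinearMap.id) (by
    intro c
    exact (map_smul (cov R N) f c).trans (hfN _))
  have hκ' : ∀ x, inc R N (κ x) = f • x := fun x => by rw [hκ]; rfl
  have os := om_ses R N
  let Φ : Cv R N →ₗ[R] S ⊗[R] Om R N := (TensorProduct.mk R S (Om R N) 1).comp κ
  have hκi : ∀ y, κ (inc R N y) = f • y := fun y => os.inj (by rw [hκ', map_smul])
  have hker : LinearMap.ker (cov R N) ≤ LinearMap.ker Φ := by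
    intro g hg
    obtain ⟨y, rfl⟩ := (os.exact g).1 hg
    change (1 : S) ⊗ₜ[R] κ _ = 0
    rw [hκi, tmul_smul, hfS]
  let ψ : N →ₗ[R] S ⊗[R] Om R N :=
    ((LinearMap.ker (cov R N)).liftQ Φ hker).comp
      ((cov R N).quotKerEquivOfSurjective os.surj).symm.toLinearMap
  have hψ : ∀ g, ψ (cov R N g) = (1 : S) ⊗ₜ[R] κ g := by
    intro g
    have : ((cov R N).quotKerEquivOfSurjective os.surj).symm (cov R N g) =
        Submodule.Quotient.mk g := by
      rw [LinearEquiv.symm_apply_eq]; rfl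
    change ((LinearMap.ker (cov R N)).liftQ Φ hker) _ = _
    rw [LinearEquiv.coe_coe, this]; rfl
  let a : N →ₗ[S] S ⊗[R] Om R N := ψ.extendScalarsOfSurjective hsurj
  have ha : ∀ g, a (cov R N g) = (1 : S) ⊗ₜ[R] κ g := hψ
  let q : S ⊗[R] Cv R N →ₗ[S] N :=
    LinearMap.liftBaseChange S (cov R N)
  have hq : Function.Surjective q := fun n => by
    obtain ⟨g, rfl⟩ := os.surj n
    exact ⟨1 ⊗ₜ g, by simp [q]⟩
  have h1 : ∀ {K : Type} [AddCommGroup K] [Module R K] (z : S ⊗[R] K), ∃ k, z = 1 ⊗ₜ k := by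
    intro K _ _ z
    obtain ⟨k, hk⟩ := TensorProduct.mk_surjective R K S hsurj z
    exact ⟨k, hk.symm⟩
  have hb : ∀ z, q ((inc R N).baseChange S z) = 0 := by
    intro z
    obtain ⟨k, rfl⟩ := h1 z
    simp only [q, LinearMap.baseChange_tmul, LinearMap.liftBaseChange_tmul]
    rw [(os.exact _).2 ⟨k, rfl⟩, smul_zero]
  let b : S ⊗[R] Om R N →ₗ[S] LinearMap.ker q := LinearMap.codRestrict _ ((inc R N).baseChange S) hb
  refine ⟨LinearMap.ker q, inferInstance, inferInstance, a, b, ⟨?_, ?_, ?_⟩, fun i => (T_snd (ker_ses hq) i).symm⟩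
  · rw [injective_iff_map_eq_zero]
    intro n hn
    obtain ⟨g, rfl⟩ := os.surj n
    rw [ha] at hn
    obtain ⟨k', hk'⟩ := tz hs _ hn
    refine (os.exact g).2 ⟨k', hG ?_⟩
    change f • _ = f • _
    rw [← hκ' g, hk', map_smul]
  · intro z
    constructor
    · intro hz
      have hz : (inc R N).baseChange S z = 0 := congrArg Subtype.val hz
      obtain ⟨k, rfl⟩ := h1 z
      rw [LinearMap.baseChange_tmul] at hz
      obtain ⟨g, hg⟩ := tz hs _ hz
      refine ⟨cov R N g, ?_⟩
      rw [ha]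
      congr 1
      apply os.inj
      rw [hκ', hg]
    · rintro ⟨n, rfl⟩
      obtain ⟨g, rfl⟩ := os.surj n
      apply Subtype.ext
      change (inc R N).baseChange S _ = 0
      rw [ha, LinearMap.baseChange_tmul, hκ', tmul_smul, ← algebraMap_smul S f, hf0, zero_smul]
  · rintro ⟨z, hz⟩
    obtain ⟨g, rfl⟩ := h1 z
    have hz : q _ = 0 := hz
    simp only [q, LinearMap.liftBaseChange_tmul, one_smul] at hz
    obtain ⟨k, rfl⟩ := (os.exact g).1 hz
    exact ⟨1 ⊗ₜ k, Subtype.ext (LinearMap.baseChange_tmul _ _ _)⟩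

lemma bcOm {f : R} (hs : SES (LinearMap.lsmul R R f) (Algebra.linearMap R S))
    {N : Type} [AddCommGroup N] [Module R N] (i : ℕ) :
    T R M (i+1) N ↔ T S M i (S ⊗[R] Om R N) := by
  have hfR : IsSMulRegular R f := hs.inj
  refine bc i (Om R N) (van_S hs ?_)
  intro x y hxy
  apply (om_ses R N).inj
  have hG : IsSMulRegular (Cv R N) f := by
    have : IsSMulRegular (N →₀ R) f := by
      intro a b hab
      ext n
      exact hfR (DFunLike.congr_fun hab n)
    exact this
  apply hG
  change f • _ = f • _
  rw [← map_smul, ← map_smul]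
  exact congrArg _ hxy

variable {N : Type} [AddCommGroup N] [Module R N] [Module S N] [IsScalarTower R S N]

lemma step_up {f : R} (hs : SES (LinearMap.lsmul R R f) (Algebra.linearMap R S)) (i : ℕ)
    (h : T S M i N) (h' : T S M (i+1) N) : T R M (i+1) N := by
  obtain ⟨N', _, _, a, b, hab, hN'⟩ := one_step (M := M) (N := N) hs
  rw [bcOm hs]
  exact L1' hab i h ((hN' i).2 h')

lemma step_down {f : R} (hs : SES (LinearMap.lsmul R R f) (Algebra.linearMap R S)) (i : ℕ)
    (h : T R M (i+2) N) (h' : T S M i N) : T S M (i+2) N := by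
  obtain ⟨N', _, _, a, b, hab, hN'⟩ := one_step (M := M) (N := N) hs
  rw [bcOm hs] at h
  exact (hN' _).1 (L2' hab i h h')

end
end TV

namespace TV
open TensorProduct

lemma iso_ring {R : Type} [CommRing R] {S : Type} [CommRing S] [Algebra R S]
    {M : Type} [AddCommGroup M] [Module R M] [Module S M] [IsScalarTower R S M]
    {N : Type} [AddCommGroup N] [Module R N] [Module S N] [IsScalarTower R S N]
    (hb : Function.Bijective (algebraMap R S)) (i : ℕ) : T R M i N ↔ T S M i N := by
  have e : R ≃ₗ[R] S := LinearEquiv.ofBijective (Algebra.linearMap R S) hb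
  have : Module.Flat R S := Module.Flat.of_linearEquiv e.symm
  rw [bc (S := S) i N (fun j => T_flat_fst j)]
  let q : S ⊗[R] N →ₗ[S] N := LinearMap.liftBaseChange S LinearMap.id
  have h1 : ∀ z : S ⊗[R] N, ∃ k, z = 1 ⊗ₜ k := by
    intro z
    obtain ⟨k, hk⟩ := TensorProduct.mk_surjective R N S hb.2 z
    exact ⟨k, hk.symm⟩
  have hq : Function.Bijective q := by
    constructor
    · intro a b hab
      obtain ⟨a, rfl⟩ := h1 a
      obtain ⟨b, rfl⟩ := h1 b
      have : a = b := by simpa [q] using hab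
      rw [this]
    · intro n
      exact ⟨1 ⊗ₜ n, by simp [q]⟩
  let eq := LinearEquiv.ofBijective q hq
  exact ⟨T_congr_snd eq.symm i, T_congr_snd eq i⟩

open RingTheory.Sequence in
lemma multi (S : Type) [CommRing S]
    (M : Type) [AddCommGroup M] [Module S M] (N : Type) [AddCommGroup N] [Module S N] (c : ℕ) :
    ∀ (R : Type) [CommRing R] [Algebra R S] [Module R M] [IsScalarTower R S M]
    [Module R N] [IsScalarTower R S N] (fs : List R) (_ : fs.length = c)
    (_ : IsWeaklyRegular R fs) (_ : Function.Surjective (algebraMap R S))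
    (_ : RingHom.ker (algebraMap R S) = Ideal.ofList fs),
    (∀ a b, (∀ i, a ≤ i → i ≤ b → T S M i N) → ∀ i, a + c ≤ i → i ≤ b → T R M i N) ∧
    (∀ a, (∀ i, a + c ≤ i → T R M i N) → (∀ i, a ≤ i → i ≤ a + c → T S M i N) →
      ∀ i, a ≤ i → T S M i N) := by
  induction c with
  | zero =>
    intro R _ _ _ _ _ _ fs hl hreg hsurj hker
    obtain rfl := List.length_eq_zero_iff.1 hl
    have hb : Function.Bijective (algebraMap R S) :=
      ⟨(RingHom.injective_iff_ker_eq_bot _).2 (by rw [hker, Ideal.ofList_nil]), hsurj⟩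
    constructor
    · intro a b h i hi hi'
      exact (iso_ring hb i).2 (h i (by omega) hi')
    · intro a h _ i hi
      exact (iso_ring hb i).1 (h i (by omega))
  | succ c ih =>
    intro R _ _ _ _ _ _ fs hl hreg hsurj hker
    match fs, hl, hreg, hker with
    | f :: fs, hl, hreg, hker =>
    rw [isWeaklyRegular_cons_iff'] at hreg
    obtain ⟨hf, hreg⟩ := hreg
    have hle : Ideal.span {f} ≤ RingHom.ker (algebraMap R S) := by
      rw [hker, Ideal.ofList_cons]; exact le_sup_left
    let R' := R ⧸ Ideal.span {f}
    let φ : R' →+* S := Ideal.Quotient.lift (Ideal.span {f}) (algebraMap R S) (fun a ha => hle ha)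
    have hφ : ∀ r, φ (Ideal.Quotient.mk _ r) = algebraMap R S r := fun r => rfl
    letI : Algebra R' S := φ.toAlgebra
    letI : Module R' M := Module.compHom M φ
    letI : Module R' N := Module.compHom N φ
    haveI : IsScalarTower R' S M := IsScalarTower.of_algebraMap_smul (fun r m => rfl)
    haveI : IsScalarTower R' S N := IsScalarTower.of_algebraMap_smul (fun r m => rfl)
    haveI : IsScalarTower R R' M := IsScalarTower.of_algebraMap_smul (fun r m => by
      change algebraMap R S r • m = _
      exact algebraMap_smul S r m)
    haveI : IsScalarTower R R' N := IsScalarTower.of_algebraMap_smul (fun r m => by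
      change algebraMap R S r • m = _
      exact algebraMap_smul S r m)
    have hs : SES (LinearMap.lsmul R R f) (Algebra.linearMap R R') := by
      refine ⟨hf, ?_, Ideal.Quotient.mk_surjective⟩
      intro r
      change Ideal.Quotient.mk _ r = 0 ↔ _
      rw [Ideal.Quotient.eq_zero_iff_mem, Ideal.mem_span_singleton]
      exact ⟨fun ⟨t, ht⟩ => ⟨t, ht.symm⟩, fun ⟨t, ht⟩ => ⟨t, ht.symm⟩⟩
    have hreg' : IsWeaklyRegular R' (fs.map (Ideal.Quotient.mk (Ideal.span {f}))) := by
      have e0 : QuotSMulTop f R ≃ₗ[R] R' := Submodule.quotEquivOfEq _ _ (by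
        rw [← Submodule.ideal_span_singleton_smul]; simp)
      have e := e0.extendScalarsOfSurjective (S := R') Ideal.Quotient.mk_surjective
      exact (e.isWeaklyRegular_congr _).1 hreg
    have hker' : RingHom.ker (algebraMap R' S) =
        Ideal.ofList (fs.map (Ideal.Quotient.mk (Ideal.span {f}))) := by
      rw [← Ideal.map_ofList]
      ext x
      obtain ⟨r, rfl⟩ := Ideal.Quotient.mk_surjective x
      rw [Ideal.mem_quotient_iff_mem_sup]
      change r ∈ RingHom.ker (algebraMap R S) ↔ _
      rw [hker, Ideal.ofList_cons, sup_comm]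
    obtain ⟨up, down⟩ := ih R' (fs.map (Ideal.Quotient.mk (Ideal.span {f})))
      (by simpa using hl) hreg' (fun s => by
        obtain ⟨r, rfl⟩ := hsurj s
        exact ⟨Ideal.Quotient.mk _ r, rfl⟩) hker'
    constructor
    · intro a b h i hi hi'
      have u := up a b h
      obtain ⟨i, rfl⟩ : ∃ i', i = i' + 1 := ⟨i - 1, by omega⟩
      exact step_up (S := R') hs i (u i (by omega) (by omega)) (u (i+1) (by omega) hi')
    · intro a h h'
      have u := up a (a + (c+1)) h'
      apply down a _ (fun i hi hi' => h' i hi (by omega))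
      intro i
      induction i using Nat.strong_induction_on with
      | _ i IH =>
        intro hi
        by_cases hc : i ≤ a + (c+1)
        · exact u i hi hc
        · obtain ⟨i, rfl⟩ : ∃ i', i = i' + 2 := ⟨i - 2, by omega⟩
          exact step_down hs i (h _ (by omega)) (IH i (by omega) (by omega))

end TV

theorem statement18 (R : Type) [CommRing R] [IsNoetherianRing R] [IsLocalRing R]
    (d : ℕ) (hdim : ringKrullDim R = (d : WithBot ℕ∞)) (hCM : depth R R = (d : ℕ∞))
    (hmin : HasMinimalMultiplicity R d)
    (c : ℕ) (fs : List R) (hlen : fs.length = c) (hmem : ∀ x ∈ fs, x ∈ maximalIdeal R)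
    (hreg : RingTheory.Sequence.IsWeaklyRegular R fs)
    [IsLocalRing (R ⧸ Ideal.ofList fs)]
    (M : Type) [AddCommGroup M] [Module (R ⧸ Ideal.ofList fs) M]
    [Module.Finite (R ⧸ Ideal.ofList fs) M]
    (dS tS : ℕ) (hdS : ringKrullDim (R ⧸ Ideal.ofList fs) = (dS : WithBot ℕ∞))
    (htS : depth (R ⧸ Ideal.ofList fs) M = (tS : ℕ∞)) :
    ∀ (N : ModuleCat (R ⧸ Ideal.ofList fs)), Module.Finite (R ⧸ Ideal.ofList fs) N →
      ∀ n : ℕ, 1 ≤ n →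
      (∀ i : ℕ, n ≤ i → i ≤ n + (d + c + (dS - tS) + 1) →
        TorVanish (R ⧸ Ideal.ofList fs) M N i) →
      ∀ i : ℕ, n ≤ i → TorVanish (R ⧸ Ideal.ofList fs) M N i := by
  intro N hN n hn hT
  obtain ⟨n, rfl⟩ : ∃ n', n = n' + 1 := ⟨n - 1, by omega⟩
  let S := R ⧸ Ideal.ofList fs
  have hsurj : Function.Surjective (algebraMap R S) := Ideal.Quotient.mk_surjective
  letI : Module R M := Module.compHom M (algebraMap R S)
  letI : Module R N := Module.compHom N (algebraMap R S)
  haveI : IsScalarTower R S M := IsScalarTower.of_algebraMap_smul (fun r m => rfl)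
  haveI : IsScalarTower R S N := IsScalarTower.of_algebraMap_smul (fun r m => rfl)
  haveI : Module.Finite R M := Module.Finite.trans S M
  haveI : Module.Finite R N := Module.Finite.trans S N
  have hker : RingHom.ker (algebraMap R S) = Ideal.ofList fs := Ideal.mk_ker
  obtain ⟨up, down⟩ := TV.multi S M N c R fs hlen hreg hsurj hker
  have hS : ∀ i, n ≤ i → i ≤ n + (d + c + (dS - tS) + 1) → TV.T S M i N := by
    intro i hi hi'
    exact (TV.torVanish_iff N i).1 (hT (i+1) (by omega) (by omega))
  have hR := up _ _ hS
  -- dimension bound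
  have hd : d ≤ dS + c := by
    classical
    have h1 := ringKrullDim_le_ringKrullDim_add_card (R := R) (S := fs.toFinset) (by
      intro x hx
      exact hmem x (by simpa using hx))
    have h2 : Ideal.span (SetLike.coe fs.toFinset) = Ideal.ofList fs := by
      unfold Ideal.ofList
      congr 1
      ext x
      simp
    rw [h2, hdim, hdS] at h1
    have h3 : d ≤ dS + fs.toFinset.card := by exact_mod_cast h1
    have h4 := fs.toFinset_card_le
    omega
  -- a long regular sequence
  obtain ⟨ys, hym, hys, hyl⟩ : ∃ ys : List R, (∀ x ∈ ys, x ∈ maximalIdeal R) ∧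
      RingTheory.Sequence.IsWeaklyRegular M ys ∧ tS ≤ ys.length := by
    rcases Nat.eq_zero_or_pos tS with h0 | h0
    · exact ⟨[], by simp, RingTheory.Sequence.IsWeaklyRegular.nil R M, by simp [h0]⟩
    · have hlt : ((tS - 1 : ℕ) : ℕ∞) < depth S M := by
        rw [htS]
        exact_mod_cast (by omega : tS - 1 < tS)
      obtain ⟨a, ⟨rs, hrm, hrr, rfl⟩, hra⟩ := lt_sSup_iff.1 hlt
      have hra : tS - 1 < rs.length := by exact_mod_cast hra
      obtain ⟨ys, rfl⟩ := (List.map_surjective_iff.2 hsurj) rs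
      refine ⟨ys, ?_, (RingTheory.Sequence.isWeaklyRegular_map_algebraMap_iff S M ys).1
        hrr.toIsWeaklyRegular, by simp at hra; omega⟩
      intro x hx
      rw [mem_maximalIdeal]
      intro hu
      have := hrm _ (List.mem_map_of_mem hx)
      rw [mem_maximalIdeal] at this
      exact this (hu.map (algebraMap R S))
  obtain ⟨xs, hxl, hxm, hxr, hmx⟩ := hmin
  have hmain := TV.mainR d xs hxl hxm hxr (hmx ▸ Ideal.mul_le_left) M N ys hym hys
    (c + (dS - tS)) (by omega) n (fun j hj hj' => hR j (by omega) (by omega))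
  have hall : ∀ i, n + c ≤ i → TV.T R M i N := by
    intro i hi
    by_cases h : i ≤ n + (d + c + (dS - tS) + 1)
    · exact hR i hi h
    · exact hmain i (by omega)
  have hfin := down n hall (fun i hi hi' => hS i hi (by omega))
  intro i hi
  obtain ⟨i, rfl⟩ : ∃ i', i = i' + 1 := ⟨i - 1, by omega⟩
  exact (TV.torVanish_iff N i).2 (hfin i (by omega))
end
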